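/- arXiv:1409.2767 — 2 statements merged into one kernel-verified Lean document; each statement's English description precedes it below -/
import Mathlib

section
/- Suppose the prior satisfies the small-ball condition: there are constants c > 0 and C̄ > 0 (independent of n) such that Π({s ∈ 𝒳 : ‖s − s0‖_∞ < ε̃_n}) ≥ c·exp(−C̄·n·ε̃_n²) for all n. Then there exists a constant M̃ > 0 such that, with ε_n = M̃·ε̃_n, the posterior mass of the complement of the L²-ball of radius ε_n around s0 tends to zero in probability: for every δ > 0, ℙ_{s0}( Π({s ∈ 𝒳 : ‖s − s0‖_2 ≥ ε_n} | Y_{1,n},…,Y_{n,n}) > δ ) → 0 as n → ∞. -/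
noncomputable section
open MeasureTheory ProbabilityTheory Real Filter

def memX (κ K M : ℝ) (s : ℝ → ℝ) : Prop :=
  (∀ u ∈ Set.Icc (0:ℝ) 1, s u ∈ Set.Icc κ K) ∧
  DifferentiableOn ℝ s (Set.Icc (0:ℝ) 1) ∧
  ∀ u ∈ Set.Icc (0:ℝ) 1, |derivWithin s (Set.Icc (0:ℝ) 1) u| ≤ M

def vin (s : ℝ → ℝ) (n i : ℕ) : ℝ := ∫ u in (((i:ℝ) - 1)/n)..((i:ℝ)/n), (s u)^2

def gaussDensity (v y : ℝ) : ℝ := (Real.sqrt (2 * π * v))⁻¹ * Real.exp (-(y^2) / (2*v))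

def fS (s0 s : ℝ → ℝ) (n : ℕ) (z : ℝ) : ℝ :=
  (∫ u in z..(z + 1/n), ((s0 u)^2 - (s u)^2)) / (∫ u in z..(z + 1/n), (s u)^2)

def supDist (s t : ℝ → ℝ) : ℝ := ⨆ u : Set.Icc (0:ℝ) 1, |s u.1 - t u.1|

def l2DistSq (s t : ℝ → ℝ) : ℝ := ∫ u in (0:ℝ)..1, (s u - t u)^2

def jointLaw (s0 : ℝ → ℝ) (n : ℕ) : Measure (Fin n → ℝ) :=
  Measure.pi fun i => gaussianReal 0 (Real.toNNReal (vin s0 n (i.1 + 1)))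

def Ln (s : ℝ → ℝ) (n : ℕ) (y : Fin n → ℝ) : ℝ :=
  ∏ i : Fin n, gaussDensity (vin s n (i.1 + 1)) (y i)

def likRatio (s0 s : ℝ → ℝ) (n : ℕ) (y : Fin n → ℝ) : ℝ :=
  ∏ i : Fin n, gaussDensity (vin s n (i.1 + 1)) (y i) / gaussDensity (vin s0 n (i.1 + 1)) (y i)

def rateCond (ε : ℕ → ℝ) : Prop :=
  (∀ n, 0 < ε n) ∧ ∃ a b : ℝ, 0 < a ∧ a ≤ b ∧
    ∀ n : ℕ, 2 ≤ n →
      a * (n:ℝ) ^ (-(1:ℝ)/3) * Real.log n ≤ ε n ∧ ε n ≤ b * (n:ℝ) ^ (-(1:ℝ)/3) * Real.log n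

def Meps (K ε : ℝ) : ℕ := sInf {m : ℕ | 0 < m ∧ 4 * K^2 ≤ (2:ℝ)^m * ε^2}

def sigma0Sq : ℝ := 2 * ∫ z, (1 - z^2)^2 * Real.exp (|1 - z^2| / 3) ∂(gaussianReal 0 1)

/-!
The likelihood ratio is controlled uniformly over the whole class on a single event of high
probability, so that neither tests nor an interchange of prior and sampling integrals are needed.

Write `qᵢ(s) = n · vin s n (i + 1)`, `gᵢ = 1 - qᵢ(s0) / qᵢ(s)` and let `Xᵢ = Yᵢ² / vᵢ(s0) - 1` be
the centred `χ²₁` noise. Then `2 log (Ln s / Ln s0) = ∑ (log (1 - gᵢ) + gᵢ) + ∑ Xᵢ gᵢ`. Since the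
ratios `1 - gᵢ` stay in a compact subset of `(0, ∞)`, the first sum lies between two negative
multiples of `∑ gᵢ²` (`log_drift_bounds`), and `∑ gᵢ²` is comparable with `n ‖s - s0‖²`: from below
with the `L²`-norm (`l2DistSq_le`), from above with the supremum norm (`cellMean_sq_sub_le`).

For the linear term, a Chernoff bound and a union bound over all index intervals of length at most
`m ≈ n^{2/3}` show that all the corresponding partial sums of the noise are `O(√m log n)`, with
probability tending to one (`noise_event`). As `s` and `s0` are Lipschitz, `gᵢ` varies by `O(1/n)`
between neighbours, and summation by parts within blocks of length `m` gives, simultaneously for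
all `s`, `|∑ Xᵢ gᵢ| ≤ η ∑ gᵢ² + O(n^{1/3} log² n)` (`noise_small`).

Hence on this event `Ln s / Ln s0 ≤ exp (-k₁ n ‖s - s0‖₂² + O(n εₙ²))` for all `s` in the class,
while `Ln s / Ln s0 ≥ exp (-O(n εₙ²))` on the supremum-norm ball of radius `εₙ`
(`likelihood_bounds`). Integrating against the prior and using the small-ball condition in the
denominator (`posterior_ratio_le`), the posterior mass at `L²`-distance at least `Mt · εₙ` is at
most `exp (-n εₙ²) / c` for `Mt` large, which tends to zero.
-/

/-! ### Partial sums of the centred squared observations -/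

/-- A centred `χ²₁` variable is sub-exponential. -/
lemma chiSq_mgf {v l : ℝ} (hv : 0 < v) (hl : |l| ≤ 1 / 4) :
    Integrable (fun y : ℝ => exp (l * (y ^ 2 / v - 1))) (gaussianReal 0 v.toNNReal) ∧
    ∫ y, exp (l * (y ^ 2 / v - 1)) ∂(gaussianReal 0 v.toNNReal) ≤ exp (4 * l ^ 2) := by
  have hl' := abs_le.1 hl
  have hv0 : v.toNNReal ≠ 0 := by simpa using hv
  have hx : 0 < 1 - 2 * l := by linarith
  have key : ∫ y, exp (l * (y ^ 2 / v - 1)) ∂(gaussianReal 0 v.toNNReal)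
      = exp (-l) * (√(1 - 2 * l))⁻¹ := by
    rw [integral_gaussianReal_eq_integral_smul hv0]
    have h1 : ∀ y : ℝ, gaussianPDFReal 0 v.toNNReal y • exp (l * (y ^ 2 / v - 1))
        = ((√(2 * π * v))⁻¹ * exp (-l)) * exp (-((1 - 2 * l) / (2 * v)) * y ^ 2) := by
      intro y
      simp only [gaussianPDFReal, smul_eq_mul, Real.coe_toNNReal v hv.le, sub_zero]
      rw [mul_assoc _ (exp _) (exp _), mul_assoc _ (exp (-l)), ← exp_add, ← exp_add]
      congr 2
      field_simp
      ring
    simp_rw [h1]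
    rw [integral_const_mul, integral_gaussian]
    have h2 : π / ((1 - 2 * l) / (2 * v)) = (2 * π * v) / (1 - 2 * l) := by
      field_simp
    rw [h2, sqrt_div (by positivity)]
    have h3 : √(2 * π * v) ≠ 0 := by positivity
    have h4 : √(1 - 2 * l) ≠ 0 := (sqrt_pos.2 hx).ne'
    field_simp
  refine ⟨?_, ?_⟩
  · apply Integrable.of_integral_ne_zero
    rw [key]
    have := sqrt_pos.2 hx
    positivity
  · rw [key]
    have h5 : |2 * l| ≤ 1 / 2 := by
      rw [abs_mul, abs_two]; linarith
    have h6 := Real.abs_log_sub_add_sum_range_le (x := 2 * l) (by linarith) 1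
    simp only [Finset.sum_range_one, Nat.cast_zero, zero_add, pow_one, div_one] at h6
    have h7 : |2 * l| ^ (1 + 1) / (1 - |2 * l|) ≤ 8 * l ^ 2 := by
      rw [div_le_iff₀ (by linarith)]
      have : |2 * l| ^ (1 + 1) = 4 * l ^ 2 := by
        rw [sq_abs]; ring
      rw [this]
      nlinarith [sq_nonneg l]
    have h8 := (abs_le.1 (h6.trans h7)).1
    have h9 : (√(1 - 2 * l))⁻¹ = exp (-(log (1 - 2 * l) / 2)) := by
      rw [exp_neg, ← log_sqrt hx.le, exp_log (sqrt_pos.2 hx)]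
    rw [h9, ← exp_add, exp_le_exp]
    linarith

/-- Chernoff bound for weighted sums of centred `χ²₁` variables over a set of indices. -/
lemma chiSq_tail {n : ℕ} (v : Fin n → ℝ) (hv : ∀ i, 0 < v i) (I : Finset (Fin n)) {l : ℝ}
    (hl : |l| ≤ 1 / 4) (t : ℝ) :
    (Measure.pi fun i => gaussianReal 0 (v i).toNNReal).real
      {y | t ≤ l * ∑ i ∈ I, ((y i) ^ 2 / v i - 1)} ≤ exp (4 * l ^ 2 * I.card - t) := by
  classical
  set μ := Measure.pi fun i => gaussianReal 0 (v i).toNNReal with hμ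
  let f : Fin n → ℝ → ℝ := fun i y => if i ∈ I then exp (l * (y ^ 2 / v i - 1)) else 1
  have hexp : ∀ y : Fin n → ℝ,
      exp (1 * (l * ∑ i ∈ I, ((y i) ^ 2 / v i - 1))) = ∏ i, f i (y i) := by
    intro y
    simp only [f]
    rw [one_mul, Finset.mul_sum, exp_sum, Finset.prod_ite_mem, Finset.univ_inter]
  have hint : ∀ i, Integrable (f i) (gaussianReal 0 (v i).toNNReal) := by
    intro i
    by_cases hi : i ∈ I
    · simpa only [f, hi, if_true] using (chiSq_mgf (hv i) hl).1
    · simp only [f, hi, if_false]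
      exact integrable_const _
  have h1 := measure_ge_le_exp_mul_mgf (μ := μ)
    (X := fun y => l * ∑ i ∈ I, ((y i) ^ 2 / v i - 1)) (t := 1) t zero_le_one (by
      simp_rw [hexp]
      exact Integrable.fintype_prod hint)
  refine h1.trans ?_
  have h2 : mgf (fun y => l * ∑ i ∈ I, ((y i) ^ 2 / v i - 1)) μ 1 ≤ exp (4 * l ^ 2 * I.card) := by
    unfold mgf
    simp_rw [hexp]
    rw [hμ, integral_fintype_prod_eq_prod]
    have : ∀ i ∈ Finset.univ, ∫ x, f i x ∂(gaussianReal 0 (v i).toNNReal)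
        ≤ if i ∈ I then exp (4 * l ^ 2) else 1 := by
      intro i _
      by_cases hi : i ∈ I
      · simpa only [f, hi, if_true] using (chiSq_mgf (hv i) hl).2
      · simp [f, hi]
    refine (Finset.prod_le_prod (fun i _ => integral_nonneg fun x => ?_) this).trans ?_
    · simp only [f]
      split_ifs <;> positivity
    · rw [Finset.prod_ite_mem, Finset.univ_inter, Finset.prod_const, ← exp_nat_mul]
      rw [exp_le_exp]
      linarith
  calc exp (-1 * t) * mgf (fun y => l * ∑ i ∈ I, ((y i) ^ 2 / v i - 1)) μ 1
      ≤ exp (-1 * t) * exp (4 * l ^ 2 * I.card) := by gcongr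
    _ = _ := by rw [← exp_add]; congr 1; ring

/-- The normalised, centred squared observations `yᵢ² / vᵢ - 1`, extended by zero to all of `ℕ`. -/
def chiNoise {n : ℕ} (v : Fin n → ℝ) (y : Fin n → ℝ) (i : ℕ) : ℝ :=
  if h : i < n then (y ⟨i, h⟩) ^ 2 / v ⟨i, h⟩ - 1 else 0

lemma sum_chiNoise {n : ℕ} (v y : Fin n → ℝ) (a k : ℕ) (h : a + k ≤ n) :
    ∑ i ∈ Finset.range k, chiNoise v y (a + i)
      = ∑ i ∈ Finset.univ.filter (fun i : Fin n => a ≤ i.1 ∧ i.1 < a + k),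
          ((y i) ^ 2 / v i - 1) := by
  have h1 := Finset.sum_Ico_eq_sum_range (chiNoise v y) a (a + k)
  rw [Nat.add_sub_cancel_left] at h1
  rw [← h1, Finset.sum_filter]
  have h2 : Finset.Ico a (a + k) = (Finset.range n).filter (fun i => a ≤ i ∧ i < a + k) := by
    ext i
    simp only [Finset.mem_Ico, Finset.mem_filter, Finset.mem_range]
    omega
  rw [h2, Finset.sum_filter, Finset.sum_range]
  refine Finset.sum_congr rfl fun i _ => ?_
  simp [chiNoise]

/-- The partial sums of the noise over all index intervals of length at most `m` are simultaneously
of order `√m · log n`, outside an event of vanishing probability. -/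
lemma noise_event {n m : ℕ} (hn : 1 ≤ n) (hm : 1 ≤ m) (v : Fin n → ℝ) (hv : ∀ i, 0 < v i) :
    (Measure.pi fun i => gaussianReal 0 (v i).toNNReal)
      {y | ¬ ∀ a k : ℕ, k ≤ m → a + k ≤ n →
        |∑ i ∈ Finset.range k, chiNoise v y (a + i)| ≤ 16 * √m * log n}
      ≤ ENNReal.ofReal (8 * exp (1 / 4) * ((n : ℝ) ^ 2)⁻¹) := by
  set μ := Measure.pi fun i => gaussianReal 0 (v i).toNNReal with hμ
  have hn0 : (0 : ℝ) < n := by exact_mod_cast hn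
  have hm0 : (0 : ℝ) < m := by exact_mod_cast hm
  let bad : ℕ × ℕ → Set (Fin n → ℝ) := fun p =>
    {y | p.2 ≤ m ∧ p.1 + p.2 ≤ n ∧
      16 * √m * log n < |∑ i ∈ Finset.range p.2, chiNoise v y (p.1 + i)|}
  have hsub : {y | ¬ ∀ a k : ℕ, k ≤ m → a + k ≤ n →
        |∑ i ∈ Finset.range k, chiNoise v y (a + i)| ≤ 16 * √m * log n}
      ⊆ ⋃ p ∈ Finset.range (n + 1) ×ˢ Finset.range (n + 1), bad p := by
    intro y hy
    simp only [Set.mem_ofPred_eq] at hy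
    push Not at hy
    obtain ⟨a, k, hk, hak, h⟩ := hy
    simp only [Set.mem_iUnion]
    refine ⟨(a, k), ?_, hk, hak, h⟩
    simp only [Finset.mem_product, Finset.mem_range]
    omega
  have hbad : ∀ p ∈ Finset.range (n + 1) ×ˢ Finset.range (n + 1),
      μ (bad p) ≤ ENNReal.ofReal (2 * exp (1 / 4) * ((n : ℝ) ^ 4)⁻¹) := by
    rintro ⟨a, k⟩ -
    by_cases hk : k ≤ m ∧ a + k ≤ n
    swap
    · have : bad (a, k) = ∅ := by
        ext y
        simp only [bad, Set.mem_ofPred_eq, Set.mem_empty_iff_false, iff_false]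
        tauto
      rw [this]; simp
    obtain ⟨hk, hak⟩ := hk
    set I := Finset.univ.filter (fun i : Fin n => a ≤ i.1 ∧ i.1 < a + k) with hI
    have hcard : I.card ≤ m := by
      have : I.card ≤ (Finset.Ico a (a + k)).card := by
        refine Finset.card_le_card_of_injOn (fun i => i.1) ?_ ?_
        · intro i hi
          simp only [hI, Finset.coe_filter, Finset.mem_univ, true_and, Set.mem_ofPred_eq] at hi
          simpa using hi
        · intro i _ j _ h
          exact Fin.ext h
      rw [Nat.card_Ico] at this
      omega
    have hcard' : (I.card : ℝ) ≤ m := by exact_mod_cast hcard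
    have hs : 0 < √(m : ℝ) := sqrt_pos.2 hm0
    have hs1 : 1 ≤ √(m : ℝ) := by
      rw [Real.one_le_sqrt]; exact_mod_cast hm
    have hss : √(m : ℝ) ^ 2 = m := sq_sqrt hm0.le
    have hone : ∀ l : ℝ, |l| = 1 / (4 * √m) →
        μ.real {y | 4 * log n ≤ l * ∑ i ∈ I, ((y i) ^ 2 / v i - 1)}
          ≤ exp (1 / 4) * ((n : ℝ) ^ 4)⁻¹ := by
      intro l hl
      have h1 : |l| ≤ 1 / 4 := by
        rw [hl]
        apply one_div_le_one_div_of_le <;> linarith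
      refine (chiSq_tail v hv I h1 (4 * log n)).trans ?_
      have h2 : exp (4 * log n) = (n : ℝ) ^ 4 := by
        rw [show 4 * log (n : ℝ) = ((4 : ℕ) : ℝ) * log n by norm_num, exp_nat_mul, exp_log hn0]
      rw [sub_eq_add_neg, exp_add, exp_neg, h2]
      gcongr
      rw [← sq_abs l, hl, div_pow, mul_pow, hss]
      rw [show 4 * (1 ^ 2 / (4 ^ 2 * (m : ℝ))) * I.card = (I.card / m) * (1 / 4) by
        field_simp]
      have : (I.card : ℝ) / m ≤ 1 := by rw [div_le_one hm0]; exact hcard'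
      linarith
    have hcover : bad (a, k) ⊆
        {y | 4 * log n ≤ (1 / (4 * √m)) * ∑ i ∈ I, ((y i) ^ 2 / v i - 1)} ∪
        {y | 4 * log n ≤ (-(1 / (4 * √m))) * ∑ i ∈ I, ((y i) ^ 2 / v i - 1)} := by
      rintro y ⟨-, -, hy⟩
      simp only [] at hy
      rw [sum_chiNoise v y a k hak, ← hI] at hy
      set Z := ∑ i ∈ I, ((y i) ^ 2 / v i - 1)
      rcases lt_abs.1 hy with h | h
      · left
        simp only [Set.mem_ofPred_eq]
        rw [one_div_mul_eq_div, le_div_iff₀ (by positivity)]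
        linarith
      · right
        simp only [Set.mem_ofPred_eq]
        rw [neg_mul, ← mul_neg, one_div_mul_eq_div, le_div_iff₀ (by positivity)]
        linarith
    have hpos : 0 < 1 / (4 * √(m : ℝ)) := by positivity
    have hreal : μ.real (bad (a, k)) ≤ 2 * exp (1 / 4) * ((n : ℝ) ^ 4)⁻¹ := by
      refine (measureReal_mono hcover).trans ((measureReal_union_le _ _).trans ?_)
      have h1 := hone (1 / (4 * √m)) (abs_of_pos hpos)
      have h2 := hone (-(1 / (4 * √m))) (by rw [abs_neg, abs_of_pos hpos])
      linarith
    rw [← ofReal_measureReal]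
    exact ENNReal.ofReal_le_ofReal hreal
  refine (measure_mono hsub).trans ((measure_biUnion_finset_le _ _).trans ?_)
  refine (Finset.sum_le_card_nsmul _ _ _ hbad).trans ?_
  rw [Finset.card_product, Finset.card_range, nsmul_eq_mul, ← ENNReal.ofReal_natCast,
    ← ENNReal.ofReal_mul (by positivity)]
  apply ENNReal.ofReal_le_ofReal
  have h1 : (((n + 1) * (n + 1) : ℕ) : ℝ) ≤ 4 * (n : ℝ) ^ 2 := by
    have : (1 : ℝ) ≤ n := by exact_mod_cast hn
    push_cast
    nlinarith
  calc (((n + 1) * (n + 1) : ℕ) : ℝ) * (2 * exp (1 / 4) * ((n : ℝ) ^ 4)⁻¹)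
      ≤ 4 * (n : ℝ) ^ 2 * (2 * exp (1 / 4) * ((n : ℝ) ^ 4)⁻¹) := by gcongr
    _ = 8 * exp (1 / 4) * ((n : ℝ) ^ 2)⁻¹ := by field_simp; norm_num

/-! ### Noise against slowly varying weights -/

/-- Summation by parts: the weighted sum differs from `(final weight) · (total sum)` by the
variation of the weights times a bound on the partial sums. -/
lemma abel_bound {X g : ℕ → ℝ} {T d : ℝ} {a k : ℕ}
    (hS : ∀ j ≤ k, |∑ i ∈ Finset.range j, X (a + i)| ≤ T)
    (hd : ∀ i, |g (i + 1) - g i| ≤ d) :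
    |∑ i ∈ Finset.range k, X (a + i) * g (a + i)
      - (∑ i ∈ Finset.range k, X (a + i)) * g (a + k)| ≤ T * k * d := by
  induction k with
  | zero => simp
  | succ k ih =>
    have ih' := ih fun j hj => hS j (by omega)
    rw [Finset.sum_range_succ (fun i => X (a + i) * g (a + i))]
    have e : ∑ i ∈ Finset.range k, X (a + i) * g (a + i) + X (a + k) * g (a + k)
        - (∑ i ∈ Finset.range (k + 1), X (a + i)) * g (a + (k + 1))
        = (∑ i ∈ Finset.range k, X (a + i) * g (a + i)
            - (∑ i ∈ Finset.range k, X (a + i)) * g (a + k))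
          - (∑ i ∈ Finset.range (k + 1), X (a + i)) * (g (a + k + 1) - g (a + k)) := by
      rw [Finset.sum_range_succ (fun i => X (a + i)), ← add_assoc]
      ring
    rw [e]
    refine (abs_sub _ _).trans ?_
    rw [abs_mul]
    have h1 := mul_le_mul (hS (k + 1) le_rfl) (hd (a + k)) (abs_nonneg _)
      ((abs_nonneg _).trans (hS (k + 1) le_rfl))
    push_cast
    linarith

lemma weight_drift {g : ℕ → ℝ} {d : ℝ} (hd : ∀ i, |g (i + 1) - g i| ≤ d) (b k : ℕ) :
    |g (b + k)| ≤ |g b| + k * d := by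
  induction k with
  | zero => simp
  | succ k ih =>
    have h1 := hd (b + k)
    have h2 : |g (b + k + 1)| ≤ |g (b + k)| + |g (b + k + 1) - g (b + k)| := by
      have := abs_add_le (g (b + k)) (g (b + k + 1) - g (b + k))
      rwa [add_sub_cancel] at this
    rw [← add_assoc]
    push_cast
    linarith

/-- On a full block the final weight of the summation by parts is replaced by the average of the
weights over the block. -/
lemma block_bound {X g : ℕ → ℝ} {T d : ℝ} {a m : ℕ} (hm : 1 ≤ m)
    (hS : ∀ j ≤ m, |∑ i ∈ Finset.range j, X (a + i)| ≤ T)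
    (hd : ∀ i, |g (i + 1) - g i| ≤ d) :
    |∑ i ∈ Finset.range m, X (a + i) * g (a + i)|
      ≤ T / m * ∑ i ∈ Finset.range m, |g (a + i)| + 2 * T * m * d := by
  have hm0 : (0 : ℝ) < m := by exact_mod_cast hm
  have hT : 0 ≤ T := (abs_nonneg _).trans (hS 0 (by omega))
  have hd0 : 0 ≤ d := (abs_nonneg _).trans (hd 0)
  have h1 := abel_bound hS hd
  have h2 : |∑ i ∈ Finset.range m, X (a + i) * g (a + i)| ≤ T * |g (a + m)| + T * m * d := by
    have h3 := abs_add_le (∑ i ∈ Finset.range m, X (a + i) * g (a + i)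
      - (∑ i ∈ Finset.range m, X (a + i)) * g (a + m))
      ((∑ i ∈ Finset.range m, X (a + i)) * g (a + m))
    rw [sub_add_cancel, abs_mul] at h3
    have h4 := mul_le_mul_of_nonneg_right (hS m le_rfl) (abs_nonneg (g (a + m)))
    linarith
  have h5 : ∀ j ∈ Finset.range m, |∑ i ∈ Finset.range m, X (a + i) * g (a + i)|
      ≤ T * |g (a + j)| + 2 * T * m * d := by
    intro j hj
    have hj' := Finset.mem_range.1 hj
    have h6 := weight_drift hd (a + j) (m - j)
    rw [show a + j + (m - j) = a + m by omega] at h6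
    have h7 : ((m - j : ℕ) : ℝ) * d ≤ m * d := by
      gcongr
      omega
    have h8 : T * |g (a + m)| ≤ T * (|g (a + j)| + m * d) := by
      gcongr
      linarith
    linarith
  have h9 := Finset.sum_le_sum h5
  rw [Finset.sum_const, Finset.card_range, nsmul_eq_mul, Finset.sum_add_distrib,
    ← Finset.mul_sum, Finset.sum_const, Finset.card_range, nsmul_eq_mul] at h9
  rw [div_mul_eq_mul_div, ← sub_le_iff_le_add, le_div_iff₀ hm0]
  linarith

lemma full_blocks_bound {X g : ℕ → ℝ} {T d : ℝ} {n m : ℕ} (hm : 1 ≤ m)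
    (hS : ∀ a k : ℕ, k ≤ m → a + k ≤ n → |∑ i ∈ Finset.range k, X (a + i)| ≤ T)
    (hd : ∀ i, |g (i + 1) - g i| ≤ d) (q : ℕ) (hq : q * m ≤ n) :
    |∑ i ∈ Finset.range (q * m), X i * g i|
      ≤ T / m * ∑ i ∈ Finset.range (q * m), |g i| + 2 * T * (q * m) * d := by
  induction q with
  | zero => simp
  | succ q ih =>
    have hq' : q * m + m ≤ n := by rw [← Nat.succ_mul]; exact hq
    have h1 := ih (by omega)
    have h2 := block_bound (a := q * m) hm (fun j hj => hS (q * m) j hj (by omega)) hd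
    rw [Nat.succ_mul, Finset.sum_range_add, Finset.sum_range_add]
    refine (abs_add_le _ _).trans ?_
    push_cast
    linarith

/-- Decomposition into blocks of length `m`: sums of noise against slowly varying weights are
controlled by the `ℓ¹`-norm of the weights, up to a contribution of the variation within the blocks
and a contribution of the incomplete last block. -/
lemma weighted_noise_bound {X g : ℕ → ℝ} {T d B : ℝ} {n m : ℕ} (hm : 1 ≤ m)
    (hS : ∀ a k : ℕ, k ≤ m → a + k ≤ n → |∑ i ∈ Finset.range k, X (a + i)| ≤ T)
    (hd : ∀ i, |g (i + 1) - g i| ≤ d) (hB : ∀ i, |g i| ≤ B) :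
    |∑ i ∈ Finset.range n, X i * g i|
      ≤ T / m * ∑ i ∈ Finset.range n, |g i| + 2 * T * n * d + T * (B + m * d) := by
  have hT : 0 ≤ T := (abs_nonneg _).trans (hS 0 0 (by omega) (by omega))
  have hd0 : 0 ≤ d := (abs_nonneg _).trans (hd 0)
  have hn : n = n / m * m + n % m := by rw [mul_comm]; exact (Nat.div_add_mod n m).symm
  have hr : n % m < m := Nat.mod_lt _ hm
  set q := n / m
  set r := n % m
  have h1 := full_blocks_bound hm hS hd q (by omega)
  have h2 : |∑ i ∈ Finset.range r, X (q * m + i) * g (q * m + i)| ≤ T * (B + m * d) := by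
    have hSr : ∀ j ≤ r, |∑ i ∈ Finset.range j, X (q * m + i)| ≤ T :=
      fun j hj => hS _ j (by omega) (by omega)
    have h3 := abel_bound hSr hd
    have h4 := abs_add_le (∑ i ∈ Finset.range r, X (q * m + i) * g (q * m + i)
      - (∑ i ∈ Finset.range r, X (q * m + i)) * g (q * m + r))
      ((∑ i ∈ Finset.range r, X (q * m + i)) * g (q * m + r))
    rw [sub_add_cancel, abs_mul] at h4
    have h5 := mul_le_mul (hSr r le_rfl) (hB (q * m + r)) (abs_nonneg _) hT
    have h6 : T * r * d ≤ T * m * d := by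
      have : (r : ℝ) ≤ m := by exact_mod_cast hr.le
      gcongr
    linarith
  have h7 : ∑ i ∈ Finset.range (q * m), |g i| ≤ ∑ i ∈ Finset.range n, |g i| :=
    Finset.sum_le_sum_of_subset_of_nonneg
      (Finset.range_subset_range.2 (by omega)) fun _ _ _ => abs_nonneg _
  have h8 : T / m * ∑ i ∈ Finset.range (q * m), |g i| ≤ T / m * ∑ i ∈ Finset.range n, |g i| := by
    gcongr
  have h9 : 2 * T * (q * m) * d ≤ 2 * T * n * d := by
    have : ((q : ℝ) * m) ≤ n := by
      have : q * m ≤ n := by omega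
      exact_mod_cast this
    gcongr
  have h10 : ∑ i ∈ Finset.range n, X i * g i = ∑ i ∈ Finset.range (q * m), X i * g i
      + ∑ i ∈ Finset.range r, X (q * m + i) * g (q * m + i) := by
    rw [← Finset.sum_range_add, ← hn]
  rw [h10]
  refine (abs_add_le _ _).trans ?_
  linarith

/-- With blocks of length `n^{2/3}` and partial sums of order `n^{1/3} log n`, the weighted noise is
at most a small multiple of the squared `ℓ²`-norm of the weights plus `O(n^{1/3} log² n)`. -/
lemma noise_small {X g : ℕ → ℝ} {L B η : ℝ} {n : ℕ} (hn : 3 ≤ n) (hη : 0 < η) (hL : 0 ≤ L)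
    (hS : ∀ a k : ℕ, k ≤ ⌈((n : ℝ) ^ ((1 : ℝ) / 3)) ^ 2⌉₊ → a + k ≤ n →
      |∑ i ∈ Finset.range k, X (a + i)|
        ≤ 16 * √(⌈((n : ℝ) ^ ((1 : ℝ) / 3)) ^ 2⌉₊ : ℝ) * log n)
    (hd : ∀ i, |g (i + 1) - g i| ≤ L / n) (hB : ∀ i, |g i| ≤ B) :
    |∑ i ∈ Finset.range n, X i * g i| ≤ η * ∑ i ∈ Finset.range n, g i ^ 2
      + (64 / η + 32 * (3 * L + B)) * ((n : ℝ) ^ ((1 : ℝ) / 3) * log n ^ 2) := by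
  have hn0 : (0 : ℝ) < n := by positivity
  have hn1 : (1 : ℝ) ≤ n := by exact_mod_cast (by omega : 1 ≤ n)
  set t := (n : ℝ) ^ ((1 : ℝ) / 3) with ht
  have ht1 : 1 ≤ t := Real.one_le_rpow hn1 (by norm_num)
  have ht3 : t ^ 3 = n := by
    rw [ht, ← rpow_natCast, ← rpow_mul hn0.le]; norm_num
  have hlog : 1 ≤ log n := by
    rw [Real.le_log_iff_exp_le hn0]
    have : (3 : ℝ) ≤ n := by exact_mod_cast hn
    linarith [exp_one_lt_d9]
  set m := ⌈t ^ 2⌉₊ with hm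
  have hmt : t ^ 2 ≤ m := Nat.le_ceil _
  have hmt2 : (m : ℝ) ≤ 4 * t ^ 2 := by
    have := Nat.ceil_lt_add_one (a := t ^ 2) (by positivity)
    nlinarith
  have hm0 : (0 : ℝ) < m := by nlinarith
  have hm1 : 1 ≤ m := by exact_mod_cast (Nat.cast_pos.1 hm0)
  have hmn : (m : ℝ) ≤ n := by
    have : m ≤ n := Nat.ceil_le.2 (by rw [← ht3]; nlinarith)
    exact_mod_cast this
  have hsm : √(m : ℝ) ≤ 2 * t := by
    rw [sqrt_le_left (by positivity)]; linarith
  set T := 16 * √(m : ℝ) * log n with hT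
  have hT0 : 0 ≤ T := by positivity
  have hTR : T ≤ 32 * (t * log n ^ 2) := by
    calc T ≤ 16 * (2 * t) * log n := by rw [hT]; gcongr
      _ = 32 * (t * log n) * 1 := by ring
      _ ≤ 32 * (t * log n) * log n := by gcongr
      _ = _ := by ring
  have hB0 : 0 ≤ B := (abs_nonneg _).trans (hB 0)
  have h1 := weighted_noise_bound hm1 hS hd hB
  have h2 : 2 * T * n * (L / n) = 2 * T * L := by field_simp
  have h3 : T * (B + m * (L / n)) ≤ T * (B + L) := by
    gcongr
    rw [mul_div_assoc', div_le_iff₀ hn0, mul_comm]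
    gcongr
  have h4 : ∀ i ∈ Finset.range n, T / m * |g i| ≤ η * g i ^ 2 + (T / m) ^ 2 / (4 * η) := by
    intro i _
    rw [← sq_abs (g i), ← sub_le_iff_le_add', le_div_iff₀ (by positivity)]
    nlinarith [sq_nonneg (T / m - 2 * η * |g i|)]
  have h5 := Finset.sum_le_sum h4
  rw [← Finset.mul_sum, Finset.sum_add_distrib, ← Finset.mul_sum, Finset.sum_const,
    Finset.card_range, nsmul_eq_mul] at h5
  have h6 : n * ((T / m) ^ 2 / (4 * η)) ≤ 64 / η * (t * log n ^ 2) := by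
    have e : n * ((T / m) ^ 2 / (4 * η)) = 64 / η * (n / m * log n ^ 2) := by
      rw [hT, div_pow, mul_pow, mul_pow, sq_sqrt hm0.le]
      field_simp
      norm_num
    rw [e]
    gcongr
    rw [div_le_iff₀ hm0, ← ht3]
    nlinarith
  have h7 : T * (3 * L + B) ≤ 32 * (t * log n ^ 2) * (3 * L + B) := by gcongr
  linarith

/-! ### Cell means of squared dispersion coefficients -/

/-- The mean of `F` over the `i`-th of the `n` cells `[i/n, (i+1)/n]` of the unit interval. -/
def cellMean (F : ℝ → ℝ) (n i : ℕ) : ℝ := n * ∫ u in ((i : ℝ) / n)..(((i : ℝ) + 1) / n), F u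

lemma vin_eq_cellMean (s : ℝ → ℝ) {n : ℕ} (hn : 0 < n) (i : ℕ) :
    vin s n (i + 1) = cellMean (fun u => s u ^ 2) n i / n := by
  have : (n : ℝ) ≠ 0 := by positivity
  unfold vin cellMean
  rw [mul_div_cancel_left₀ _ this]
  push_cast
  rw [add_sub_cancel_right]

lemma cell_le_cell {n : ℕ} (i : ℕ) : (i : ℝ) / n ≤ ((i : ℝ) + 1) / n := by
  gcongr
  linarith

lemma cell_subset {n i : ℕ} (hi : i < n) :
    Set.Icc ((i : ℝ) / n) (((i : ℝ) + 1) / n) ⊆ Set.Icc 0 1 := by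
  have hn : (0 : ℝ) < n := by exact_mod_cast (by omega : 0 < n)
  apply Set.Icc_subset_Icc
  · positivity
  · rw [div_le_one hn]
    exact_mod_cast hi

lemma cell_intervalIntegrable {F : ℝ → ℝ} (hF : ContinuousOn F (Set.Icc 0 1)) {n i : ℕ}
    (hi : i < n) :
    IntervalIntegrable F volume ((i : ℝ) / n) (((i : ℝ) + 1) / n) := by
  apply ContinuousOn.intervalIntegrable
  rw [Set.uIcc_of_le (cell_le_cell i)]
  exact hF.mono (cell_subset hi)

lemma cellMean_mono {F G : ℝ → ℝ} (hF : ContinuousOn F (Set.Icc 0 1))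
    (hG : ContinuousOn G (Set.Icc 0 1)) {n i : ℕ} (hi : i < n)
    (h : ∀ u ∈ Set.Icc ((i : ℝ) / n) (((i : ℝ) + 1) / n), F u ≤ G u) :
    cellMean F n i ≤ cellMean G n i := by
  unfold cellMean
  gcongr
  exact intervalIntegral.integral_mono_on (cell_le_cell i) (cell_intervalIntegrable hF hi)
    (cell_intervalIntegrable hG hi) h

lemma cellMean_const (c : ℝ) {n : ℕ} (hn : 0 < n) (i : ℕ) : cellMean (fun _ => c) n i = c := by
  have : (n : ℝ) ≠ 0 := by positivity
  simp only [cellMean, intervalIntegral.integral_const, smul_eq_mul]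
  field_simp
  ring

lemma cellMean_sub {F G : ℝ → ℝ} (hF : ContinuousOn F (Set.Icc 0 1))
    (hG : ContinuousOn G (Set.Icc 0 1)) {n i : ℕ} (hi : i < n) :
    cellMean (fun u => F u - G u) n i = cellMean F n i - cellMean G n i := by
  unfold cellMean
  rw [intervalIntegral.integral_sub (cell_intervalIntegrable hF hi)
    (cell_intervalIntegrable hG hi), mul_sub]

/-- Bounds on `F` over a cell carry over to its cell mean. -/
lemma cellMean_mem {F : ℝ → ℝ} (hF : ContinuousOn F (Set.Icc 0 1)) {n i : ℕ} (hi : i < n)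
    {lo hi' : ℝ} (h : ∀ u ∈ Set.Icc ((i : ℝ) / n) (((i : ℝ) + 1) / n), lo ≤ F u ∧ F u ≤ hi') :
    lo ≤ cellMean F n i ∧ cellMean F n i ≤ hi' := by
  have hn : 0 < n := by omega
  constructor
  · rw [← cellMean_const lo hn i]
    exact cellMean_mono continuousOn_const hF hi fun u hu => (h u hu).1
  · rw [← cellMean_const hi' hn i]
    exact cellMean_mono hF continuousOn_const hi fun u hu => (h u hu).2

lemma memX.continuousOn_sq {κ K M : ℝ} {s : ℝ → ℝ} (h : memX κ K M s) :
    ContinuousOn (fun u => s u ^ 2) (Set.Icc 0 1) :=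
  h.2.1.continuousOn.pow 2

lemma memX.sq_lipschitz {κ K M : ℝ} {s : ℝ → ℝ} (hκ : 0 < κ) (h : memX κ K M s) {x y : ℝ}
    (hx : x ∈ Set.Icc (0 : ℝ) 1) (hy : y ∈ Set.Icc (0 : ℝ) 1) :
    |s y ^ 2 - s x ^ 2| ≤ 2 * K * M * |y - x| := by
  have h1 : |s y - s x| ≤ M * |y - x| :=
    Convex.norm_image_sub_le_of_norm_derivWithin_le h.2.1 h.2.2 (convex_Icc 0 1) hx hy
  have hsx := h.1 x hx
  have hsy := h.1 y hy
  have h2 : |s y + s x| ≤ 2 * K := by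
    rw [abs_of_nonneg (by linarith [hsx.1, hsy.1])]
    linarith [hsx.2, hsy.2]
  calc |s y ^ 2 - s x ^ 2| = |s y + s x| * |s y - s x| := by rw [← abs_mul]; ring_nf
    _ ≤ 2 * K * (M * |y - x|) := by
        gcongr
        linarith [hsx.1, hsx.2]
    _ = _ := by ring

lemma memX.cellMean_mem_Icc {κ K M : ℝ} {s : ℝ → ℝ} (hκ : 0 < κ) (h : memX κ K M s) {n i : ℕ}
    (hi : i < n) :
    κ ^ 2 ≤ cellMean (fun u => s u ^ 2) n i ∧ cellMean (fun u => s u ^ 2) n i ≤ K ^ 2 := by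
  apply cellMean_mem h.continuousOn_sq hi
  intro u hu
  have := h.1 u (cell_subset hi hu)
  constructor <;> nlinarith [this.1, this.2]

/-- Within a cell, `s²` stays within `2 * K * M / n` of its mean. -/
lemma memX.cellMean_near {κ K M : ℝ} {s : ℝ → ℝ} (hκ : 0 < κ) (hK : 0 < K) (hM : 0 < M)
    (h : memX κ K M s) {n i : ℕ}
    (hi : i < n) {u : ℝ} (hu : u ∈ Set.Icc ((i : ℝ) / n) (((i : ℝ) + 1) / n)) :
    |cellMean (fun u => s u ^ 2) n i - s u ^ 2| ≤ 2 * K * M / n := by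
  have hn : (0 : ℝ) < n := by exact_mod_cast (by omega : 0 < n)
  have key := cellMean_mem h.continuousOn_sq hi (lo := s u ^ 2 - 2 * K * M / n)
    (hi' := s u ^ 2 + 2 * K * M / n) (by
      intro x hx
      have h1 := h.sq_lipschitz hκ (cell_subset hi hu) (cell_subset hi hx)
      have h2 : |x - u| ≤ 1 / n := by
        have e : ((i : ℝ) + 1) / n = i / n + 1 / n := by ring
        rw [abs_le]
        constructor <;> linarith [hx.1, hx.2, hu.1, hu.2]
      have h3 : 2 * K * M * |x - u| ≤ 2 * K * M / n := by
        calc 2 * K * M * |x - u| ≤ 2 * K * M * (1 / n) := by gcongr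
          _ = _ := by ring
      have h4 := abs_le.1 (h1.trans h3)
      constructor <;> linarith [h4.1, h4.2])
  rw [abs_le]
  constructor <;> linarith [key.1, key.2]

lemma memX.cellMean_succ {κ K M : ℝ} {s : ℝ → ℝ} (hκ : 0 < κ) (hK : 0 < K) (hM : 0 < M)
    (h : memX κ K M s) {n i : ℕ} (hi : i + 1 < n) :
    |cellMean (fun u => s u ^ 2) n (i + 1) - cellMean (fun u => s u ^ 2) n i|
      ≤ 4 * K * M / n := by
  have hu1 : ((i : ℝ) + 1) / n ∈ Set.Icc ((i : ℝ) / n) (((i : ℝ) + 1) / n) :=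
    ⟨cell_le_cell i, le_rfl⟩
  have hu2 : ((i : ℝ) + 1) / n ∈ Set.Icc (((i + 1 : ℕ) : ℝ) / n) ((((i + 1 : ℕ) : ℝ) + 1) / n) := by
    push_cast
    refine ⟨le_rfl, ?_⟩
    gcongr
    linarith
  have h1 := abs_le.1 (h.cellMean_near hκ hK hM (by omega) hu1)
  have h2 := abs_le.1 (h.cellMean_near hκ hK hM hi hu2)
  have e : 4 * K * M / n = 2 * K * M / n + 2 * K * M / n := by ring
  rw [abs_le, e]
  constructor <;> linarith [h1.1, h1.2, h2.1, h2.2]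

lemma cellMean_sq_sub_le {κ K M e : ℝ} {s s0 : ℝ → ℝ} (hκ : 0 < κ)
    (h : memX κ K M s) (h0 : memX κ K M s0)
    (he : ∀ u ∈ Set.Icc (0 : ℝ) 1, |s u - s0 u| ≤ e) {n i : ℕ} (hi : i < n) :
    |cellMean (fun u => s u ^ 2) n i - cellMean (fun u => s0 u ^ 2) n i| ≤ 2 * K * e := by
  rw [← cellMean_sub h.continuousOn_sq h0.continuousOn_sq hi, abs_le]
  apply cellMean_mem (h.continuousOn_sq.sub h0.continuousOn_sq) hi
  intro u hu
  have hu' := cell_subset hi hu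
  have h1 := h.1 u hu'
  have h2 := h0.1 u hu'
  rw [← abs_le]
  calc |s u ^ 2 - s0 u ^ 2| = |s u + s0 u| * |s u - s0 u| := by rw [← abs_mul]; ring_nf
    _ ≤ 2 * K * e := by
        gcongr
        · linarith [h1.1, h1.2]
        · rw [abs_of_nonneg (by linarith [h1.1, h2.1])]
          linarith [h1.2, h2.2]
        · exact he u hu'

/-- The `L²`-distance is controlled by the cell means of the squares, up to the discretisation
error. -/
lemma l2DistSq_le {κ K M : ℝ} {s s0 : ℝ → ℝ} (hκ : 0 < κ) (hK : 0 < K) (hM : 0 < M)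
    (h : memX κ K M s) (h0 : memX κ K M s0) {n : ℕ} (hn : 0 < n) :
    n * l2DistSq s s0 ≤ (∑ i ∈ Finset.range n,
      (cellMean (fun u => s u ^ 2) n i - cellMean (fun u => s0 u ^ 2) n i) ^ 2
        + 16 * K ^ 2 * M ^ 2 / n) / (2 * κ ^ 2) := by
  have hn0 : (0 : ℝ) < n := by exact_mod_cast hn
  have hcont : ContinuousOn (fun u => (s u - s0 u) ^ 2) (Set.Icc 0 1) :=
    (h.2.1.continuousOn.sub h0.2.1.continuousOn).pow 2
  have h1 : n * l2DistSq s s0 = ∑ i ∈ Finset.range n, cellMean (fun u => (s u - s0 u) ^ 2) n i := by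
    unfold l2DistSq cellMean
    rw [← Finset.mul_sum]
    congr 1
    have := intervalIntegral.sum_integral_adjacent_intervals (μ := volume)
      (f := fun u => (s u - s0 u) ^ 2) (a := fun k : ℕ => (k : ℝ) / n) (n := n) (by
        intro k hk
        have := cell_intervalIntegrable hcont hk
        push_cast
        exact this)
    push_cast at this
    rw [this, zero_div, div_self hn0.ne']
  have h2 : ∀ i ∈ Finset.range n, cellMean (fun u => (s u - s0 u) ^ 2) n i
      ≤ ((cellMean (fun u => s u ^ 2) n i - cellMean (fun u => s0 u ^ 2) n i) ^ 2
        + 16 * K ^ 2 * M ^ 2 / n ^ 2) / (2 * κ ^ 2) := by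
    intro i hi'
    have hi := Finset.mem_range.1 hi'
    refine (cellMean_mem hcont hi (lo := 0) ?_).2
    intro u hu
    refine ⟨sq_nonneg _, ?_⟩
    have hu' := cell_subset hi hu
    have a1 := h.1 u hu'
    have a2 := h0.1 u hu'
    have b1 := abs_le.1 (h.cellMean_near hκ hK hM hi hu)
    have b2 := abs_le.1 (h0.cellMean_near hκ hK hM hi hu)
    set P := cellMean (fun u => s u ^ 2) n i
    set P0 := cellMean (fun u => s0 u ^ 2) n i
    set w := 2 * K * M / n with hw
    have e1 : 16 * K ^ 2 * M ^ 2 / n ^ 2 = 4 * w ^ 2 := by rw [hw]; ring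
    rw [le_div_iff₀ (by positivity), e1]
    have c1 : (s u - s0 u) ^ 2 * (2 * κ) ^ 2 ≤ (s u ^ 2 - s0 u ^ 2) ^ 2 := by
      have : (s u ^ 2 - s0 u ^ 2) ^ 2 = (s u - s0 u) ^ 2 * (s u + s0 u) ^ 2 := by ring
      rw [this]
      gcongr
      linarith [a1.1, a2.1]
    have c2 : |(s u ^ 2 - s0 u ^ 2) - (P - P0)| ≤ 2 * w := by
      rw [abs_le]
      constructor <;> linarith [b1.1, b1.2, b2.1, b2.2]
    have c3 : ((s u ^ 2 - s0 u ^ 2) - (P - P0)) ^ 2 ≤ (2 * w) ^ 2 := sq_le_sq' (abs_le.1 c2).1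
      (abs_le.1 c2).2
    nlinarith [sq_nonneg ((s u ^ 2 - s0 u ^ 2) - 2 * (P - P0))]
  rw [h1]
  refine (Finset.sum_le_sum h2).trans (le_of_eq ?_)
  rw [← Finset.sum_div, Finset.sum_add_distrib, Finset.sum_const, Finset.card_range, nsmul_eq_mul]
  congr 2
  field_simp

lemma abs_sub_le_supDist {κ K M : ℝ} {s s0 : ℝ → ℝ} (hκ : 0 < κ)
    (h : memX κ K M s) (h0 : memX κ K M s0) {u : ℝ} (hu : u ∈ Set.Icc (0 : ℝ) 1) :
    |s u - s0 u| ≤ supDist s s0 := by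
  unfold supDist
  refine le_ciSup (f := fun u : Set.Icc (0 : ℝ) 1 => |s u.1 - s0 u.1|) ⟨K, ?_⟩ ⟨u, hu⟩
  rintro _ ⟨v, rfl⟩
  have h1 := h.1 v.1 v.2
  have h2 := h0.1 v.1 v.2
  simp only [abs_le]
  constructor <;> linarith [h1.1, h1.2, h2.1, h2.2]

/-! ### Likelihood ratios and the posterior -/

lemma gaussDensity_ratio {v v0 : ℝ} (hv : 0 < v) (hv0 : 0 < v0) (y : ℝ) :
    gaussDensity v y = gaussDensity v0 y
      * exp (1 / 2 * ((log (v0 / v) + 1 - v0 / v) + (y ^ 2 / v0 - 1) * (1 - v0 / v))) := by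
  unfold gaussDensity
  have h1 : (√(2 * π * v))⁻¹ = (√(2 * π * v0))⁻¹ * exp (1 / 2 * log (v0 / v)) := by
    rw [show 1 / 2 * log (v0 / v) = log (v0 / v) / 2 by ring, ← log_sqrt (by positivity),
      exp_log (by positivity), sqrt_div hv0.le, sqrt_mul (by positivity),
      sqrt_mul (by positivity) v0]
    have : √v0 ≠ 0 := by positivity
    have : √v ≠ 0 := by positivity
    field_simp
  rw [h1, mul_assoc _ (exp _) (exp _), mul_assoc _ (exp _) (exp _), ← exp_add, ← exp_add]
  congr 2
  field_simp
  ring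

/-- The log-likelihood ratio is a deterministic (Kullback–Leibler type) drift plus a linear
functional of the centred noise. -/
lemma Ln_eq {s s0 : ℝ → ℝ} {n : ℕ} (y : Fin n → ℝ) (hv : ∀ i < n, 0 < vin s n (i + 1))
    (hv0 : ∀ i < n, 0 < vin s0 n (i + 1)) :
    Ln s n y = Ln s0 n y * exp (1 / 2 *
      (∑ i ∈ Finset.range n,
          (log (vin s0 n (i + 1) / vin s n (i + 1)) + 1 - vin s0 n (i + 1) / vin s n (i + 1))
        + ∑ i ∈ Finset.range n, chiNoise (fun i : Fin n => vin s0 n (i.1 + 1)) y i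
            * (1 - vin s0 n (i + 1) / vin s n (i + 1)))) := by
  unfold Ln
  rw [← Finset.sum_add_distrib, Finset.mul_sum, exp_sum, Finset.prod_range, ← Finset.prod_mul_distrib]
  refine Finset.prod_congr rfl fun i _ => ?_
  rw [gaussDensity_ratio (hv i i.2) (hv0 i i.2)]
  simp [chiNoise]

lemma log_drift_bounds {r f : ℝ} (hr : 0 < r) (h1 : r ≤ f) (h2 : f ≤ 1 / r) :
    -((1 / r) * (1 - f) ^ 2) ≤ log f + 1 - f ∧
      log f + 1 - f ≤ -(1 / (2 * (1 / r + 1)) * (1 - f) ^ 2) := by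
  have hf : 0 < f := hr.trans_le h1
  constructor
  · have h3 := one_sub_inv_le_log_of_pos hf
    have h4 : (1 - f) ^ 2 / f ≤ 1 / r * (1 - f) ^ 2 := by
      rw [div_eq_mul_inv, mul_comm, one_div]
      gcongr
    have h5 : (1 - f) ^ 2 / f = f⁻¹ - 2 + f := by field_simp; ring
    linarith
  · have hs : 0 < √f := sqrt_pos.2 hf
    have hss : √f ^ 2 = f := sq_sqrt hf.le
    have h3 : log f ≤ 2 * (√f - 1) := by
      have h := log_le_sub_one_of_pos hs
      rw [log_sqrt hf.le] at h
      linarith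
    have h4 : 1 / (2 * (1 / r + 1)) * (1 - f) ^ 2 ≤ (√f - 1) ^ 2 := by
      rw [one_div_mul_eq_div, div_le_iff₀ (by positivity)]
      have e : (1 - f) ^ 2 = (√f - 1) ^ 2 * (√f + 1) ^ 2 := by
        rw [← hss, sqrt_sq hs.le]; ring
      rw [e]
      gcongr
      nlinarith [sq_nonneg (√f - 1)]
    nlinarith

/-- On the noise event the likelihood ratio is, uniformly over the class, at most exponentially
small in the squared `L²`-distance and at least exponentially small in the squared sup-distance,
up to terms of order `n^{1/3} log² n` in the exponent. -/
lemma likelihood_bounds {κ K M : ℝ} (hκ : 0 < κ) (hκK : κ < K) (hM : 0 < M) :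
    ∃ k1 k2 k3 : ℝ, 0 < k1 ∧ 0 < k2 ∧ 0 < k3 ∧ ∀ s0 s : ℝ → ℝ, memX κ K M s0 → memX κ K M s →
      ∀ n : ℕ, 3 ≤ n → ∀ y : Fin n → ℝ,
      (∀ a k : ℕ, k ≤ ⌈((n : ℝ) ^ ((1 : ℝ) / 3)) ^ 2⌉₊ → a + k ≤ n →
        |∑ i ∈ Finset.range k, chiNoise (fun i : Fin n => vin s0 n (i.1 + 1)) y (a + i)|
          ≤ 16 * √(⌈((n : ℝ) ^ ((1 : ℝ) / 3)) ^ 2⌉₊ : ℝ) * log n) →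
      Ln s n y ≤ Ln s0 n y
          * exp (-(k1 * (n * l2DistSq s s0)) + k2 * ((n : ℝ) ^ ((1 : ℝ) / 3) * log n ^ 2)) ∧
      Ln s0 n y * exp (-(k3 * (n * supDist s s0 ^ 2 + (n : ℝ) ^ ((1 : ℝ) / 3) * log n ^ 2)))
        ≤ Ln s n y := by
  have hK : 0 < K := hκ.trans hκK
  set r := κ ^ 2 / K ^ 2 with hr
  have hr0 : 0 < r := by positivity
  set α := 1 / (2 * (1 / r + 1)) with hα
  have hα0 : 0 < α := by positivity
  set L := 4 * K * M * (κ ^ 2 + K ^ 2) / κ ^ 4 with hLdef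
  have hL0 : 0 < L := by positivity
  set B := K ^ 2 / κ ^ 2 with hBdef
  have hB0 : 0 < B := by positivity
  -- Half of the quadratic drift absorbs the quadratic part of the noise bound.
  set D := 64 / (α / 2) + 32 * (3 * L + B) with hD
  have hD0 : 0 < D := by positivity
  refine ⟨α / 4 * (2 * κ ^ 2 / K ^ 4), α / 4 * (16 * M ^ 2 / K ^ 2) + D / 2,
    (1 / r + α / 2) / 2 * (2 * K / κ ^ 2) ^ 2 + D / 2, by positivity, by positivity, by positivity,
    ?_⟩
  intro s0 s h0 h n hn y hS
  have hnpos : 0 < n := by omega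
  have hn0 : (0 : ℝ) < n := by exact_mod_cast hnpos
  have hn1 : (1 : ℝ) ≤ n := by exact_mod_cast (by omega : 1 ≤ n)
  set R := (n : ℝ) ^ ((1 : ℝ) / 3) * log n ^ 2 with hR
  have hR1 : 1 ≤ R := by
    have h1 : 1 ≤ (n : ℝ) ^ ((1 : ℝ) / 3) := Real.one_le_rpow hn1 (by norm_num)
    have hlog : 1 ≤ log n := by
      rw [Real.le_log_iff_exp_le hn0]
      have : (3 : ℝ) ≤ n := by exact_mod_cast hn
      linarith [exp_one_lt_d9]
    rw [hR]
    exact one_le_mul_of_one_le_of_one_le h1 (one_le_pow₀ hlog)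
  set q : ℕ → ℝ := fun i => cellMean (fun u => s u ^ 2) n i with hq
  set q0 : ℕ → ℝ := fun i => cellMean (fun u => s0 u ^ 2) n i with hq0
  have hqm : ∀ i < n, κ ^ 2 ≤ q i ∧ q i ≤ K ^ 2 := fun i hi => h.cellMean_mem_Icc hκ hi
  have hq0m : ∀ i < n, κ ^ 2 ≤ q0 i ∧ q0 i ≤ K ^ 2 := fun i hi => h0.cellMean_mem_Icc hκ hi
  have hκ2 : 0 < κ ^ 2 := by positivity
  have hqp : ∀ i < n, 0 < q i := fun i hi => hκ2.trans_le (hqm i hi).1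
  have hq0p : ∀ i < n, 0 < q0 i := fun i hi => hκ2.trans_le (hq0m i hi).1
  have hv : ∀ i < n, 0 < vin s n (i + 1) := fun i hi => by
    rw [vin_eq_cellMean s hnpos]; exact div_pos (hqp i hi) hn0
  have hv0 : ∀ i < n, 0 < vin s0 n (i + 1) := fun i hi => by
    rw [vin_eq_cellMean s0 hnpos]; exact div_pos (hq0p i hi) hn0
  have hratio : ∀ i, vin s0 n (i + 1) / vin s n (i + 1) = q0 i / q i := fun i => by
    rw [vin_eq_cellMean s hnpos, vin_eq_cellMean s0 hnpos, div_div_div_cancel_right₀ hn0.ne']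
  have hLn := Ln_eq y hv hv0
  simp_rw [hratio] at hLn
  set g : ℕ → ℝ := fun i => 1 - q0 i / q i with hg
  have hgq : ∀ i < n, g i * q i = q i - q0 i := fun i hi => by
    have := (hqp i hi).ne'
    simp only [hg]
    field_simp
  have hglip : ∀ i, i + 1 < n → |g (i + 1) - g i| ≤ L / n := by
    intro i hi
    have p1 := hqp i (by omega)
    have p2 := hqp (i + 1) hi
    have m1 := hqm i (by omega)
    have m2 := hqm (i + 1) hi
    have m3 := hq0m i (by omega)
    have d1 : |q (i + 1) - q i| ≤ 4 * K * M / n := h.cellMean_succ hκ hK hM hi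
    have d2 : |q0 (i + 1) - q0 i| ≤ 4 * K * M / n := h0.cellMean_succ hκ hK hM hi
    have e : g (i + 1) - g i = (q0 i * (q (i + 1) - q i) - (q0 (i + 1) - q0 i) * q i)
        / (q i * q (i + 1)) := by
      simp only [hg]
      field_simp
      ring
    rw [e, abs_div, abs_of_pos (mul_pos p1 p2)]
    have num : |q0 i * (q (i + 1) - q i) - (q0 (i + 1) - q0 i) * q i|
        ≤ K ^ 2 * (4 * K * M / n) + (4 * K * M / n) * q i := by
      refine (abs_sub _ _).trans ?_
      rw [abs_mul, abs_mul, abs_of_pos p1, abs_of_pos (hq0p i (by omega))]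
      gcongr
      exact m3.2
    rw [div_le_iff₀ (mul_pos p1 p2)]
    refine num.trans ?_
    have hw : 0 < 4 * K * M / n := by positivity
    have e2 : L / n = (4 * K * M / n) * ((κ ^ 2 + K ^ 2) / κ ^ 4) := by rw [hLdef]; ring
    rw [e2, mul_assoc (4 * K * M / n), mul_comm (K ^ 2), ← mul_add]
    apply mul_le_mul_of_nonneg_left _ hw.le
    rw [div_mul_eq_mul_div, le_div_iff₀ (by positivity)]
    have a1 : K ^ 2 * κ ^ 4 ≤ K ^ 2 * (q i * q (i + 1)) := by
      rw [show κ ^ 4 = κ ^ 2 * κ ^ 2 by ring]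
      gcongr
      · exact m1.1
      · exact m2.1
    have a2 : q i * κ ^ 4 ≤ κ ^ 2 * (q i * q (i + 1)) := by
      rw [show q i * κ ^ 4 = κ ^ 2 * (q i * κ ^ 2) by ring]
      gcongr
      exact m2.1
    linarith
  have hgB : ∀ i < n, |g i| ≤ B := by
    intro i hi
    have p1 := hqp i hi
    have m1 := hqm i hi
    have m3 := hq0m i hi
    have : g i = (q i - q0 i) / q i := by
      rw [eq_div_iff p1.ne']; exact hgq i hi
    rw [this, abs_div, abs_of_pos p1, hBdef]
    apply div_le_div₀ (by positivity) _ hκ2 m1.1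
    rw [abs_le]
    constructor <;> linarith [m1.1, m1.2, m3.1, m3.2]
  -- The weights are frozen after the last observation so as to be slowly varying on all of `ℕ`.
  set g' : ℕ → ℝ := fun i => g (min i (n - 1)) with hg'
  have hg'eq : ∀ i ∈ Finset.range n, g' i = g i := by
    intro i hi
    have := Finset.mem_range.1 hi
    simp only [hg']
    rw [min_eq_left (by omega)]
  set G := ∑ i ∈ Finset.range n, g i ^ 2 with hG
  set Z := ∑ i ∈ Finset.range n, chiNoise (fun i : Fin n => vin s0 n (i.1 + 1)) y i * g i with hZ
  have hns : |Z| ≤ α / 2 * G + D * R := by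
    have h1 := noise_small (g := g') hn (half_pos hα0) hL0.le hS (by
        intro i
        simp only [hg']
        by_cases hi : i + 1 < n
        · rw [min_eq_left (by omega), min_eq_left (by omega)]
          exact hglip i hi
        · rw [min_eq_right (by omega), min_eq_right (by omega), sub_self, abs_zero]
          positivity)
      (fun i => hgB _ (by omega))
    have h2 : ∑ i ∈ Finset.range n, chiNoise (fun i : Fin n => vin s0 n (i.1 + 1)) y i * g' i = Z :=
      Finset.sum_congr rfl fun i hi => by rw [hg'eq i hi]
    have h3 : ∑ i ∈ Finset.range n, g' i ^ 2 = G :=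
      Finset.sum_congr rfl fun i hi => by rw [hg'eq i hi]
    rw [h2, h3] at h1
    exact h1
  have hZ' := abs_le.1 hns
  set F := ∑ i ∈ Finset.range n, (log (q0 i / q i) + 1 - q0 i / q i) with hF
  have hdrift : ∀ i ∈ Finset.range n, -((1 / r) * g i ^ 2) ≤ log (q0 i / q i) + 1 - q0 i / q i ∧
      log (q0 i / q i) + 1 - q0 i / q i ≤ -(α * g i ^ 2) := by
    intro i hi'
    have hi := Finset.mem_range.1 hi'
    apply log_drift_bounds hr0
    · exact div_le_div₀ (hq0p i hi).le (hq0m i hi).1 (hqp i hi) (hqm i hi).2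
    · rw [hr, one_div_div]
      exact div_le_div₀ (by positivity) (hq0m i hi).2 hκ2 (hqm i hi).1
  have hF1 : -((1 / r) * G) ≤ F := by
    rw [hG, Finset.mul_sum, ← Finset.sum_neg_distrib]
    exact Finset.sum_le_sum fun i hi => (hdrift i hi).1
  have hF2 : F ≤ -(α * G) := by
    rw [hG, Finset.mul_sum, ← Finset.sum_neg_distrib]
    exact Finset.sum_le_sum fun i hi => (hdrift i hi).2
  have hL0n : 0 ≤ Ln s0 n y := Finset.prod_nonneg fun i _ => by unfold gaussDensity; positivity
  rw [hLn]
  constructor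
  · have hl2 := l2DistSq_le hκ hK hM h h0 hnpos
    have hΔ : ∑ i ∈ Finset.range n, (q i - q0 i) ^ 2 ≤ K ^ 4 * G := by
      rw [hG, Finset.mul_sum]
      refine Finset.sum_le_sum fun i hi' => ?_
      have hi := Finset.mem_range.1 hi'
      rw [← hgq i hi, mul_pow, mul_comm]
      have : q i ^ 2 ≤ K ^ 4 := by
        rw [show K ^ 4 = (K ^ 2) ^ 2 by ring]
        exact pow_le_pow_left₀ (hqp i hi).le (hqm i hi).2 2
      gcongr
    have h1n : 16 * K ^ 2 * M ^ 2 / n ≤ 16 * K ^ 2 * M ^ 2 * R := by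
      rw [div_le_iff₀ hn0, mul_assoc]
      have : 1 ≤ R * n := one_le_mul_of_one_le_of_one_le hR1 hn1
      nlinarith [show 0 < 16 * K ^ 2 * M ^ 2 by positivity]
    have hGl : 2 * κ ^ 2 / K ^ 4 * (n * l2DistSq s s0) ≤ G + 16 * M ^ 2 / K ^ 2 * R := by
      rw [le_div_iff₀ (by positivity)] at hl2
      have e : G + 16 * M ^ 2 / K ^ 2 * R = (K ^ 4 * G + 16 * K ^ 2 * M ^ 2 * R) / K ^ 4 := by
        field_simp
      rw [e, div_mul_eq_mul_div, div_le_div_iff_of_pos_right (by positivity)]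
      linarith
    gcongr
    have := mul_le_mul_of_nonneg_left hGl (by positivity : 0 ≤ α / 4)
    linarith [hZ'.2]
  · have hsup : ∀ u ∈ Set.Icc (0 : ℝ) 1, |s u - s0 u| ≤ supDist s s0 :=
      fun u hu => abs_sub_le_supDist hκ h h0 hu
    set e := supDist s s0
    have he0 : 0 ≤ e := (abs_nonneg _).trans (hsup 0 (by simp))
    have hGu : G ≤ (2 * K / κ ^ 2) ^ 2 * (n * e ^ 2) := by
      have : ∀ i ∈ Finset.range n, g i ^ 2 ≤ (2 * K / κ ^ 2 * e) ^ 2 := by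
        intro i hi'
        have hi := Finset.mem_range.1 hi'
        have p1 := hqp i hi
        have e1 : g i = (q i - q0 i) / q i := by
          rw [eq_div_iff p1.ne']; exact hgq i hi
        have d1 : |q i - q0 i| ≤ 2 * K * e := cellMean_sq_sub_le hκ h h0 hsup hi
        rw [← sq_abs]
        apply pow_le_pow_left₀ (abs_nonneg _)
        rw [e1, abs_div, abs_of_pos p1, div_mul_eq_mul_div]
        exact div_le_div₀ (by positivity) d1 hκ2 (hqm i hi).1
      have := Finset.sum_le_sum this
      rw [Finset.sum_const, Finset.card_range, nsmul_eq_mul] at this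
      refine this.trans (le_of_eq ?_)
      ring
    gcongr
    have hA : 0 ≤ (1 / r + α / 2) / 2 := by positivity
    have h1 := mul_le_mul_of_nonneg_left hGu hA
    have h2 : 0 ≤ (1 / r + α / 2) / 2 * (2 * K / κ ^ 2) ^ 2 * R := by positivity
    have h3 : 0 ≤ D / 2 * (n * e ^ 2) := by positivity
    linarith [hZ'.1]

/-- Deterministic comparison of posterior numerator and denominator. No measurability of the sets
involved is needed: it suffices that the likelihood is measurable in the parameter. -/
lemma posterior_ratio_le {Θ : Type*} [MeasurableSpace Θ] (μ : Measure Θ) [IsProbabilityMeasure μ]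
    {f : Θ → ℝ} (hf : Measurable f) {X S Bl : Set Θ} {L0 U A b p : ℝ} (hL0 : 0 < L0)
    (hb : 0 < b) (hp : 0 < p) (hA : 0 ≤ A) (hX : ∀ᵐ x ∂μ, x ∈ X) (h0 : ∀ x ∈ X, 0 ≤ f x)
    (hU : ∀ x ∈ X, f x ≤ U) (hS : ∀ x ∈ S, x ∈ X ∧ f x ≤ L0 * A) (hBl : ∀ x ∈ Bl, L0 * b ≤ f x)
    (hpB : ENNReal.ofReal p ≤ μ Bl) :
    (∫ x in S, f x ∂μ) / (∫ x in X, f x ∂μ) ≤ A / (b * p) := by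
  rw [Measure.restrict_eq_self_of_ae_mem hX]
  have hint : Integrable f μ := by
    refine Integrable.of_bound hf.aestronglyMeasurable U ?_
    filter_upwards [hX] with x hx
    rw [norm_eq_abs, abs_of_nonneg (h0 x hx)]
    exact hU x hx
  have hden : L0 * b * p ≤ ∫ x, f x ∂μ := by
    have h1 := mul_meas_ge_le_integral_of_nonneg (hX.mono h0) hint (L0 * b)
    refine le_trans ?_ h1
    gcongr
    have h2 : ENNReal.ofReal p ≤ μ {x | L0 * b ≤ f x} := hpB.trans (measure_mono hBl)
    exact (ENNReal.ofReal_le_iff_le_toReal (measure_ne_top _ _)).1 h2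
  have hnum : ∫ x in S, f x ∂μ ≤ L0 * A := by
    have hae : ∀ᵐ x ∂μ.restrict S, ‖f x‖ ≤ L0 * A := by
      rw [ae_restrict_iff (measurableSet_le hf.norm measurable_const)]
      refine ae_of_all _ fun x hx => ?_
      rw [norm_eq_abs, abs_of_nonneg (h0 x (hS x hx).1)]
      exact (hS x hx).2
    have h1 := norm_setIntegral_le_of_norm_le_const_ae (measure_lt_top μ S) hae
    refine (le_abs_self _).trans (h1.trans ?_)
    exact mul_le_of_le_one_right (by positivity) measureReal_le_one
  have hpos : 0 < L0 * b * p := by positivity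
  calc (∫ x in S, f x ∂μ) / (∫ x, f x ∂μ) ≤ (L0 * A) / (L0 * b * p) :=
        div_le_div₀ (by positivity) hnum hpos hden
    _ = A / (b * p) := by field_simp

/-! ### Contraction of the posterior -/

theorem statement0 (κ K M : ℝ) (hκ : 0 < κ) (hκK : κ < K) (hM : 0 < M)
    (s0 : ℝ → ℝ) (hs0 : memX κ K M s0)
    (mF : MeasurableSpace (ℝ → ℝ)) (pr : @MeasureTheory.Measure (ℝ → ℝ) mF)
    (hpr : IsProbabilityMeasure pr)
    (hprX : pr {s : ℝ → ℝ | ¬ memX κ K M s} = 0)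
    (hmeas : ∀ (n : ℕ) (y : Fin n → ℝ), @Measurable _ _ mF _ (fun s : ℝ → ℝ => Ln s n y))
    (εt : ℕ → ℝ) (hrate : rateCond εt)
    (c Cbar : ℝ) (hc : 0 < c) (hCbar : 0 < Cbar)
    (hprior : ∀ n : ℕ,
      ENNReal.ofReal (c * Real.exp (-Cbar * n * (εt n)^2))
        ≤ pr {s : ℝ → ℝ | memX κ K M s ∧ supDist s s0 < εt n}) :
    ∃ Mt : ℝ, 0 < Mt ∧ ∀ δ : ℝ, 0 < δ →
      Filter.Tendsto (fun n : ℕ =>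
        jointLaw s0 n {y : Fin n → ℝ | δ <
          (∫ s in {s : ℝ → ℝ | memX κ K M s ∧ Mt * εt n ≤ Real.sqrt (l2DistSq s s0)},
              Ln s n y ∂pr)
            / (∫ s in {s : ℝ → ℝ | memX κ K M s}, Ln s n y ∂pr)})
        atTop (nhds 0) := by
  obtain ⟨k1, k2, k3, hk1, hk2, hk3, hlik⟩ := likelihood_bounds hκ hκK hM
  obtain ⟨hε0, a, b, ha, -, hab⟩ := hrate
  -- `Mt` is chosen so that the exponent of the posterior ratio is at most `-n εₙ²`.
  set W := 1 + k2 / a ^ 2 + k3 + k3 / a ^ 2 + Cbar with hW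
  have hW0 : 0 < W := by positivity
  refine ⟨√(W / k1), sqrt_pos.2 (by positivity), ?_⟩
  intro δ hδ
  have hMt : √(W / k1) ^ 2 = W / k1 := sq_sqrt (by positivity)
  set Mt := √(W / k1)
  have hMt0 : 0 < Mt := sqrt_pos.2 (by positivity)
  have hK : 0 < K := hκ.trans hκK
  set R : ℕ → ℝ := fun n => (n : ℝ) ^ ((1 : ℝ) / 3) * log n ^ 2 with hR
  have hRε : ∀ n : ℕ, 3 ≤ n → a ^ 2 * R n ≤ n * εt n ^ 2 := by
    intro n hn
    have hn0 : (0 : ℝ) < n := by exact_mod_cast (by omega : 0 < n)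
    have h1 := (hab n (by omega)).1
    have hlog : 0 ≤ log (n : ℝ) := log_natCast_nonneg n
    have h2 : (a * (n : ℝ) ^ (-(1 : ℝ) / 3) * log n) ^ 2 ≤ εt n ^ 2 := by
      gcongr
    have h3 : (n : ℝ) ^ ((1 : ℝ) / 3) = n * ((n : ℝ) ^ (-(1 : ℝ) / 3)) ^ 2 := by
      rw [← rpow_natCast, ← rpow_mul hn0.le]
      nth_rewrite 2 [← rpow_one (n : ℝ)]
      rw [← rpow_add hn0]
      norm_num
    calc a ^ 2 * R n = n * (a * (n : ℝ) ^ (-(1 : ℝ) / 3) * log n) ^ 2 := by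
          simp only [hR]; rw [h3]; ring
      _ ≤ _ := by gcongr
  have hRlarge : ∀ n : ℕ, 3 ≤ n → (n : ℝ) ^ ((1 : ℝ) / 3) ≤ R n := by
    intro n hn
    have hn0 : (0 : ℝ) < n := by exact_mod_cast (by omega : 0 < n)
    have hlog : 1 ≤ log n := by
      rw [Real.le_log_iff_exp_le hn0]
      have : (3 : ℝ) ≤ n := by exact_mod_cast hn
      linarith [exp_one_lt_d9]
    exact le_mul_of_one_le_right (by positivity) (one_le_pow₀ hlog)
  have hEtop : Tendsto (fun n : ℕ => n * εt n ^ 2) atTop atTop := by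
    have h1 : Tendsto (fun n : ℕ => a ^ 2 * (n : ℝ) ^ ((1 : ℝ) / 3)) atTop atTop :=
      ((tendsto_rpow_atTop (by norm_num)).comp tendsto_natCast_atTop_atTop).const_mul_atTop
        (by positivity)
    refine tendsto_atTop_mono' _ ?_ h1
    filter_upwards [eventually_ge_atTop 3] with n hn
    exact (mul_le_mul_of_nonneg_left (hRlarge n hn) (by positivity)).trans (hRε n hn)
  have hsmall : ∀ᶠ n : ℕ in atTop, exp (-(n * εt n ^ 2)) / c ≤ δ := by
    have h1 : Tendsto (fun n : ℕ => exp (-(n * εt n ^ 2)) / c) atTop (nhds (0 / c)) :=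
      (tendsto_exp_neg_atTop_nhds_zero.comp hEtop).div_const c
    rw [zero_div] at h1
    exact h1.eventually (ge_mem_nhds hδ)
  have hlim : Tendsto (fun n : ℕ => ENNReal.ofReal (8 * exp (1 / 4) * ((n : ℝ) ^ 2)⁻¹)) atTop
      (nhds 0) := by
    have h1 : Tendsto (fun n : ℕ => 8 * exp (1 / 4) * ((n : ℝ) ^ 2)⁻¹) atTop
        (nhds (8 * exp (1 / 4) * 0)) :=
      (tendsto_inv_atTop_zero.comp
        ((tendsto_pow_atTop two_ne_zero).comp tendsto_natCast_atTop_atTop)).const_mul _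
    rw [mul_zero] at h1
    simpa using ENNReal.tendsto_ofReal h1
  refine tendsto_of_tendsto_of_tendsto_of_le_of_le' tendsto_const_nhds hlim
    (Eventually.of_forall fun _ => zero_le) ?_
  filter_upwards [eventually_ge_atTop 3, hsmall] with n hn hδn
  have hnpos : 0 < n := by omega
  have hn0 : (0 : ℝ) < n := by exact_mod_cast hnpos
  have hvpos : ∀ i < n, 0 < vin s0 n (i + 1) := by
    intro i hi
    rw [vin_eq_cellMean s0 hnpos]
    exact div_pos ((pow_pos hκ 2).trans_le (hs0.cellMean_mem_Icc hκ hi).1) hn0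
  have hm1 : 1 ≤ ⌈((n : ℝ) ^ ((1 : ℝ) / 3)) ^ 2⌉₊ := Nat.one_le_ceil_iff.2 (by positivity)
  refine le_trans (measure_mono ?_)
    (noise_event (by omega) hm1 (fun i : Fin n => vin s0 n (i.1 + 1)) fun i => hvpos i i.2)
  intro y hy hgood
  refine absurd (Set.mem_ofPred_eq ▸ hy) (not_lt.2 ?_)
  have hRE := hRε n hn
  have hRn : R n ≤ n * εt n ^ 2 / a ^ 2 := by
    rw [le_div_iff₀ (by positivity)]; linarith
  set E := n * εt n ^ 2 with hE
  have hL0 : 0 < Ln s0 n y := Finset.prod_pos fun i _ => by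
    have := hvpos i i.2
    unfold gaussDensity; positivity
  have hLnn : ∀ s, 0 ≤ Ln s n y := fun s => Finset.prod_nonneg fun i _ => by
    unfold gaussDensity; positivity
  have hmain := @posterior_ratio_le (ℝ → ℝ) mF pr hpr (fun s => Ln s n y) (hmeas n y)
    {s | memX κ K M s} {s | memX κ K M s ∧ Mt * εt n ≤ √(l2DistSq s s0)}
    {s | memX κ K M s ∧ supDist s s0 < εt n} (Ln s0 n y) (Ln s0 n y * exp (k2 * R n))
    (exp (-(k1 * (Mt ^ 2 * E)) + k2 * R n)) (exp (-(k3 * (E + R n))))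
    (c * exp (-Cbar * n * (εt n) ^ 2)) hL0 (exp_pos _) (by positivity) (exp_pos _).le
    hprX (fun s _ => hLnn s) (by
      intro s hs
      refine (hlik s0 s hs0 hs n hn y hgood).1.trans ?_
      have hl2 : 0 ≤ l2DistSq s s0 :=
        intervalIntegral.integral_nonneg zero_le_one fun _ _ => sq_nonneg _
      gcongr
      have : 0 ≤ k1 * (n * l2DistSq s s0) := by positivity
      simp only [hR]
      linarith) (by
      rintro s ⟨hs, hfar⟩
      refine ⟨hs, (hlik s0 s hs0 hs n hn y hgood).1.trans ?_⟩
      have h1 : (Mt * εt n) ^ 2 ≤ l2DistSq s s0 :=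
        (Real.le_sqrt' (mul_pos hMt0 (hε0 n))).1 hfar
      have h2 : Mt ^ 2 * E ≤ n * l2DistSq s s0 := by
        calc Mt ^ 2 * E = n * (Mt * εt n) ^ 2 := by rw [hE]; ring
          _ ≤ _ := by gcongr
      gcongr) (by
      rintro s ⟨hs, hnear⟩
      refine le_trans ?_ (hlik s0 s hs0 hs n hn y hgood).2
      have h1 : 0 ≤ supDist s s0 :=
        (abs_nonneg _).trans (abs_sub_le_supDist hκ hs hs0 (u := 0) (by simp))
      have h2 : n * supDist s s0 ^ 2 ≤ E := by
        rw [hE]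
        gcongr
      gcongr) (hprior n)
  refine hmain.trans (le_trans ?_ hδn)
  have e1 : exp (-(k1 * (Mt ^ 2 * E)) + k2 * R n)
      / (exp (-(k3 * (E + R n))) * (c * exp (-Cbar * n * (εt n) ^ 2)))
      = exp (-(k1 * (Mt ^ 2 * E)) + k2 * R n + k3 * (E + R n) + Cbar * E) / c := by
    rw [show -Cbar * n * (εt n) ^ 2 = -(Cbar * E) by rw [hE]; ring,
      show exp (-(k1 * (Mt ^ 2 * E)) + k2 * R n + k3 * (E + R n) + Cbar * E)
        = exp (-(k1 * (Mt ^ 2 * E)) + k2 * R n) / (exp (-(k3 * (E + R n))) * exp (-(Cbar * E))) by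
        rw [← exp_add, ← exp_sub]
        congr 1
        ring]
    field_simp
  rw [e1]
  gcongr
  have e2 : k1 * (Mt ^ 2 * E) = W * E := by rw [hMt]; field_simp
  rw [e2, hW]
  have h1 : (k2 + k3) * R n ≤ (k2 + k3) * (E / a ^ 2) := by gcongr
  have e3 : (k2 + k3) * (E / a ^ 2) = (k2 / a ^ 2 + k3 / a ^ 2) * E := by ring
  linarith
end
end

section
/- (Lemma A.3.) There exist constants c̃₀ > 0 with c̃₀ ≤ (K⁴/κ⁴)·σ₀·(σ₀ ∧ 4), c₁ > 0 with c₁ < c̃₀κ²/(2K⁴), and C > 0 such that for all n large enough, ℙ_{s0}( sup_{s ∈ 𝒳, ‖s−s0‖_2 ≥ ε_n} ∏_{i=1}^n p_{i,n,s}(Y_{i,n})/p_{i,n,0}(Y_{i,n}) ≥ exp(−c₁ n ε_n²) ) ≤ C·M_{ε_n}·exp( −((c̃₀κ²/(2K⁴) − c₁)² / (8C²(4K²/κ⁴ + 1)σ₀²))·n·ε_n² ); in particular, the left-hand side converges to zero as n → ∞. -/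
/-!
Write `W_i = Y_i² / v_i(s0) - 1` and `h_i = v_i(s0) / v_i(s) - 1`. Since
`log (1 + h) ≤ h - h² / (2 (R + 1))` for `1 + h ≤ R = K² / κ²`, the log-likelihood ratio of `s`
is at most `-c ∑ h_i² - ½ ∑ W_i h_i`, with `c = 1 / (4 (R + 1))`. The quadratic term is at least
of order `n ε_n²` when `‖s - s0‖₂ ≥ ε_n` (`l2_le`), and the issue is the supremum over `s` of the
linear term.

The sequence `-h` is bounded with increments of order `1 / n` (`relDev_step`). Cut `{1, …, n}` into
about `n^(1/3)` blocks of length about `n^(2/3)`. On a block, round the initial value to the grid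
`ℤ / n` and sum by parts: the linear functional is dominated by its value at a sequence which is
constant up to one jump of size `δ ≍ n^(-1/3)` (`block_pattern`). Gluing the blocks gives a finite
net such that every `-h` is dominated by some `a` in the net, with `|a + h| ≤ 2 δ` uniformly
(`net_pattern`). Hence the exceedance event is covered by the events
`½ ∑ W_i a_i - (c / 4) ∑ a_i² ≥ const · n ε_n²`. Each of these has probability at most
`exp (-const · n ε_n²)` by the Chernoff bound `E exp (a W) ≤ exp (4 a²)`, `|a| ≤ 1/4` (`chernoff`).
The errors made, of order `n δ² ≍ n^(1/3)`, and the log-cardinality of the net, of order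
`n^(1/3) log n`, are negligible against `n ε_n² ≍ n^(1/3) (log n)²` (`scales`, `core_bound`).

The resulting bound `exp (-cc n ε_n²)` with a fixed `cc > 0` implies the claim, because `C` may be
taken large enough for the claimed exponent to be at most `cc`.
-/

noncomputable section
open MeasureTheory ProbabilityTheory Real Filter

/-! ### Exponential moments of a centred squared Gaussian -/

lemma gauss_quad (v : NNReal) (hv : v ≠ 0) (b : ℝ) (hb : b < 1 / 2) :
    Integrable (fun y : ℝ => Real.exp (b * (y ^ 2 / v))) (gaussianReal 0 v) ∧
    ∫ y, Real.exp (b * (y ^ 2 / v)) ∂(gaussianReal 0 v) = (√(1 - 2 * b))⁻¹ := by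
  have hv0 : (0 : ℝ) < v := by exact_mod_cast pos_iff_ne_zero.mpr hv
  have hc : 0 < (1 / 2 - b) / (v : ℝ) := div_pos (by linarith) hv0
  have key : ∀ y : ℝ, gaussianPDFReal 0 v y * Real.exp (b * (y ^ 2 / v))
      = (√(2 * π * v))⁻¹ * Real.exp (-((1 / 2 - b) / (v : ℝ)) * y ^ 2) := by
    intro y
    rw [gaussianPDFReal, mul_assoc, ← Real.exp_add]
    congr 2
    field_simp
    ring
  constructor
  · rw [gaussianReal_of_var_ne_zero _ hv, integrable_withDensity_iff
      (measurable_gaussianPDF _ _) (by simp [gaussianPDF])]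
    have := (integrable_exp_neg_mul_sq hc).const_mul (√(2 * π * v))⁻¹
    refine this.congr (ae_of_all _ fun y => ?_)
    simp only [toReal_gaussianPDF]
    rw [← key, mul_comm]
  · rw [integral_gaussianReal_eq_integral_smul hv]
    simp only [smul_eq_mul, key]
    rw [integral_const_mul, integral_gaussian, ← Real.sqrt_inv, ← Real.sqrt_inv,
      ← Real.sqrt_mul (by positivity)]
    congr 1
    have h2 : 1 - 2 * b ≠ 0 := by linarith
    have h3 : 1 / 2 - b ≠ 0 := by linarith
    field_simp

lemma inv_sqrt_le (a : ℝ) (ha : |a| ≤ 1 / 4) :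
    (√(1 - 2 * a))⁻¹ ≤ Real.exp (a + 4 * a ^ 2) := by
  have ha' := abs_le.mp ha
  have h1 : |2 * a| ≤ 1 / 2 := by rw [abs_mul]; norm_num; linarith
  have h := Real.abs_log_sub_add_sum_range_le (x := 2 * a) (by linarith) 1
  simp only [Finset.sum_range_one] at h
  norm_num at h
  have hpos : 0 < 1 - 2 * a := by linarith
  have h2 : (2 * |a|) ^ 2 / (1 - 2 * |a|) ≤ 8 * a ^ 2 := by
    rw [div_le_iff₀ (by linarith), mul_pow, sq_abs]
    nlinarith [sq_nonneg a]
  have h3 := (abs_le.mp (h.trans h2)).1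
  rw [Real.sqrt_eq_rpow, ← Real.rpow_neg hpos.le, Real.rpow_def_of_pos hpos]
  apply Real.exp_le_exp.mpr
  nlinarith

/-- One-coordinate sub-exponential bound: the centred square of a normalised Gaussian variable
has logarithmic moment generating function at most `4 a²` on `[-1/4, 1/4]`. -/
lemma chi_mgf (v : NNReal) (hv : v ≠ 0) (a : ℝ) (ha : |a| ≤ 1 / 4) :
    Integrable (fun y : ℝ => Real.exp (a * (y ^ 2 / v - 1))) (gaussianReal 0 v) ∧
    ∫ y, Real.exp (a * (y ^ 2 / v - 1)) ∂(gaussianReal 0 v) ≤ Real.exp (4 * a ^ 2) := by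
  have ha' := abs_le.mp ha
  obtain ⟨h1, h2⟩ := gauss_quad v hv a (by linarith)
  have key : (fun y : ℝ => Real.exp (a * (y ^ 2 / v - 1)))
      = fun y : ℝ => Real.exp (-a) * Real.exp (a * (y ^ 2 / v)) := by
    ext y
    rw [← Real.exp_add]
    congr 1
    ring
  rw [key]
  refine ⟨h1.const_mul _, ?_⟩
  rw [integral_const_mul, h2]
  calc Real.exp (-a) * (√(1 - 2 * a))⁻¹ ≤ Real.exp (-a) * Real.exp (a + 4 * a ^ 2) := by
        gcongr
        exact inv_sqrt_le a ha
    _ = _ := by rw [← Real.exp_add]; congr 1; ring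

/-- Chernoff bound for a linear combination of independent centred squared Gaussians. -/
lemma chernoff {n : ℕ} (v : Fin n → NNReal) (hv : ∀ i, v i ≠ 0) (a : Fin n → ℝ)
    (ha : ∀ i, |a i| ≤ 1 / 4) (x : ℝ) :
    Measure.pi (fun i => gaussianReal 0 (v i))
      {y : Fin n → ℝ | x ≤ ∑ i, a i * ((y i) ^ 2 / v i - 1)}
      ≤ ENNReal.ofReal (Real.exp (4 * ∑ i, a i ^ 2 - x)) := by
  set μ := Measure.pi (fun i => gaussianReal 0 (v i)) with hμ
  have hexp : (fun y : Fin n → ℝ => Real.exp (1 * ∑ i, a i * ((y i) ^ 2 / v i - 1)))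
      = fun y => ∏ i, Real.exp (a i * ((y i) ^ 2 / v i - 1)) := by
    ext y
    rw [one_mul, Real.exp_sum]
  have hint : Integrable
      (fun y : Fin n → ℝ => Real.exp (1 * ∑ i, a i * ((y i) ^ 2 / v i - 1))) μ := by
    rw [hexp]
    exact Integrable.fintype_prod
      (f := fun i (z : ℝ) => Real.exp (a i * (z ^ 2 / v i - 1)))
      (fun i => (chi_mgf (v i) (hv i) (a i) (ha i)).1)
  have hmain := measure_ge_le_exp_mul_mgf (μ := μ)
    (X := fun y : Fin n → ℝ => ∑ i, a i * ((y i) ^ 2 / v i - 1)) x zero_le_one hint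
  have hmgf : mgf (fun y : Fin n → ℝ => ∑ i, a i * ((y i) ^ 2 / v i - 1)) μ 1
      ≤ Real.exp (4 * ∑ i, a i ^ 2) := by
    rw [mgf, hexp, integral_fintype_prod_eq_prod
      (f := fun i (z : ℝ) => Real.exp (a i * (z ^ 2 / v i - 1))), Finset.mul_sum, Real.exp_sum]
    refine Finset.prod_le_prod (fun i _ => integral_nonneg fun _ => (Real.exp_pos _).le)
      fun i _ => (chi_mgf (v i) (hv i) (a i) (ha i)).2
  rw [ENNReal.le_ofReal_iff_toReal_le (measure_ne_top _ _) (Real.exp_pos _).le]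
  refine hmain.trans ?_
  calc Real.exp (-1 * x) * _ ≤ Real.exp (-1 * x) * Real.exp (4 * ∑ i, a i ^ 2) := by gcongr
    _ = _ := by rw [← Real.exp_add]; congr 1; ring

lemma sigma0Sq_pos : 0 < sigma0Sq := by
  have hb : ∀ z : ℝ, (1 - z ^ 2) ^ 2 * Real.exp (|1 - z ^ 2| / 3)
      ≤ (200 * Real.exp (9 / 20)) * Real.exp (9 / 20 * (z ^ 2 / (1 : NNReal))) := by
    intro z
    set t := |1 - z ^ 2| with ht
    have ht0 : 0 ≤ t := abs_nonneg _
    have ht1 : t ≤ 1 + z ^ 2 := by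
      rw [ht, abs_le]; constructor <;> nlinarith [sq_nonneg z]
    have h1 : (1 - z ^ 2) ^ 2 ≤ 200 * Real.exp (t / 10) := by
      rw [← sq_abs, ← ht]
      nlinarith [Real.quadratic_le_exp_of_nonneg (x := t / 10) (by positivity)]
    have h2 : Real.exp (t / 10) * Real.exp (t / 3)
        ≤ Real.exp (9 / 20) * Real.exp (9 / 20 * (z ^ 2 / (1 : NNReal))) := by
      rw [← Real.exp_add, ← Real.exp_add]
      apply Real.exp_le_exp.mpr
      simp
      nlinarith
    calc _ ≤ 200 * Real.exp (t / 10) * Real.exp (t / 3) := by gcongr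
      _ = 200 * (Real.exp (t / 10) * Real.exp (t / 3)) := by ring
      _ ≤ 200 * (Real.exp (9 / 20) * Real.exp (9 / 20 * (z ^ 2 / (1 : NNReal)))) := by gcongr
      _ = _ := by ring
  have hint : Integrable (fun z : ℝ => (1 - z ^ 2) ^ 2 * Real.exp (|1 - z ^ 2| / 3))
      (gaussianReal 0 1) := by
    refine Integrable.mono' (((gauss_quad 1 one_ne_zero (9 / 20) (by norm_num)).1).const_mul
      (200 * Real.exp (9 / 20))) ?_ (ae_of_all _ fun z => ?_)
    · exact (by fun_prop : Continuous _).aestronglyMeasurable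
    · rw [Real.norm_of_nonneg (by positivity)]
      exact hb z
  unfold sigma0Sq
  refine mul_pos two_pos ((integral_pos_iff_support_of_nonneg (fun z => by positivity) hint).mpr ?_)
  have hss : Set.Ioo (0 : ℝ) 1 ⊆
      Function.support (fun z : ℝ => (1 - z ^ 2) ^ 2 * Real.exp (|1 - z ^ 2| / 3)) := by
    intro z hz
    have : 0 < 1 - z ^ 2 := by nlinarith [hz.1, hz.2]
    exact ne_of_gt (by positivity)
  refine lt_of_lt_of_le (pos_iff_ne_zero.mpr fun h0 => ?_) (measure_mono hss)
  have := gaussianReal_absolutelyContinuous' 0 (one_ne_zero : (1 : NNReal) ≠ 0) h0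
  simp at this

/-! ### A finite family of piecewise-constant patterns -/

/-- On a block, the pattern with code `(k, l, σ)` equals `k / n` up to position `l`,
and is shifted by `σ δ` from position `l` on. -/
def pat (n : ℕ) (δ : ℝ) (q : ℤ × ℕ × ℤ) (p : ℕ) : ℝ :=
  (q.1 : ℝ) / n + if q.2.1 ≤ p then δ * (q.2.2 : ℝ) else 0

/-- The admissible codes: level in `[-G, G]`, jump position in a block of length `m`,
sign of the jump. -/
def codes (G m : ℕ) : Finset (ℤ × ℕ × ℤ) :=
  Finset.Icc (-(G : ℤ)) G ×ˢ Finset.range m ×ˢ {1, -1}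

lemma card_codes (G m : ℕ) : (codes G m).card = (2 * G + 1) * (m * 2) := by
  simp only [codes, Finset.card_product, Int.card_Icc, Finset.card_range]
  congr 1
  omega

/-- Summation by parts on one block: a linear functional of a slowly varying sequence `u` is
dominated by its value at some pattern which is uniformly close to `u`. -/
lemma block_pattern (n m G : ℕ) (hn : 0 < n) (hm : 0 < m) (L R : ℝ) (hL : 1 ≤ L)
    (hG : R * n + 1 ≤ G) (W u : ℕ → ℝ) (hu0 : |u 0| ≤ R)
    (hu : ∀ p, |u (p + 1) - u p| ≤ L / n) :
    ∃ q ∈ codes G m,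
      ∑ p ∈ Finset.range m, W p * u p ≤ ∑ p ∈ Finset.range m, W p * pat n (L * m / n) q p ∧
      ∀ p < m, |pat n (L * m / n) q p - u p| ≤ 2 * (L * m / n) := by
  have hn0 : (0 : ℝ) < n := by exact_mod_cast hn
  have hLn : 0 ≤ L / n := by positivity
  set δ := L * m / n with hδ
  have hδ0 : 0 ≤ δ := by positivity
  set k : ℤ := ⌊n * u 0⌋ with hk
  have hk1 : (k : ℝ) ≤ n * u 0 := Int.floor_le _
  have hk2 : (n : ℝ) * u 0 < k + 1 := Int.lt_floor_add_one _
  set d : ℕ → ℝ := fun l => if l = 0 then u 0 - k / n else u l - u (l - 1) with hd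
  have hdb : ∀ l, |d l| ≤ L / n := by
    intro l
    rcases l with _ | l
    · simp only [hd, if_true]
      rw [abs_le]
      have e : u 0 - k / n = (n * u 0 - k) / n := by field_simp
      rw [e]
      constructor
      · have : 0 ≤ (n * u 0 - k) / (n : ℝ) := div_nonneg (by linarith) hn0.le
        linarith
      · gcongr
        linarith
    · simpa [hd] using hu l
  have hsum : ∀ p, u p = k / n + ∑ l ∈ Finset.range (p + 1), d l := by
    intro p
    induction p with
    | zero => simp [hd]
    | succ p ih =>
      rw [Finset.sum_range_succ, ← add_assoc, ← ih]
      simp [hd]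
  have hsum' : ∀ p ∈ Finset.range m,
      u p = k / n + ∑ l ∈ Finset.range m, if l ≤ p then d l else 0 := by
    intro p hp
    rw [hsum p, ← Finset.sum_filter]
    congr 2
    ext l
    simp only [Finset.mem_range, Finset.mem_filter] at hp ⊢
    omega
  set T : ℕ → ℝ := fun l => ∑ p ∈ Finset.range m, if l ≤ p then W p else 0 with hT
  obtain ⟨l, hl, hmax⟩ := Finset.exists_max_image (Finset.range m) (fun l => |T l|)
    ⟨0, Finset.mem_range.mpr hm⟩
  set σ : ℤ := if 0 ≤ T l then 1 else -1 with hσ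
  have hσT : (σ : ℝ) * T l = |T l| := by
    rw [hσ]; split_ifs with h
    · simp [abs_of_nonneg h]
    · simp [abs_of_neg (not_le.mp h)]
  have hσ1 : |(σ : ℝ)| = 1 := by rw [hσ]; split_ifs <;> simp
  have hR := abs_le.mp hu0
  refine ⟨(k, l, σ), ?_, ?_, ?_⟩
  · simp only [codes, Finset.mem_product, Finset.mem_Icc, Finset.mem_insert,
      Finset.mem_singleton]
    refine ⟨⟨?_, ?_⟩, hl, ?_⟩
    · have : -(G : ℝ) ≤ k := by nlinarith
      exact_mod_cast this
    · have : (k : ℝ) ≤ G := by nlinarith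
      exact_mod_cast this
    · rw [hσ]; split_ifs <;> simp
  · have e1 : ∑ p ∈ Finset.range m, W p * u p
        = ∑ p ∈ Finset.range m, W p * (k / n) + ∑ l ∈ Finset.range m, d l * T l := by
      rw [Finset.sum_congr rfl fun p hp => by rw [hsum' p hp, mul_add], Finset.sum_add_distrib]
      congr 1
      simp only [hT, Finset.mul_sum]
      rw [Finset.sum_comm]
      refine Finset.sum_congr rfl fun i _ => Finset.sum_congr rfl fun j _ => ?_
      split_ifs <;> ring
    have e2 : ∑ p ∈ Finset.range m, W p * pat n δ (k, l, σ) p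
        = ∑ p ∈ Finset.range m, W p * (k / n) + δ * (σ * T l) := by
      simp only [pat, mul_add, Finset.sum_add_distrib]
      congr 1
      simp only [hT, Finset.mul_sum]
      refine Finset.sum_congr rfl fun i _ => ?_
      split_ifs <;> ring
    rw [e1, e2, hσT]
    gcongr
    calc ∑ l ∈ Finset.range m, d l * T l ≤ ∑ _l' ∈ Finset.range m, L / n * |T l| := by
          refine Finset.sum_le_sum fun i hi => ?_
          calc d i * T i ≤ |d i * T i| := le_abs_self _
            _ = |d i| * |T i| := abs_mul _ _
            _ ≤ _ := mul_le_mul (hdb i) (hmax i hi) (abs_nonneg _) hLn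
      _ = δ * |T l| := by
          rw [Finset.sum_const, Finset.card_range, nsmul_eq_mul, hδ]; ring
  · intro p hp
    have h1 : |∑ l ∈ Finset.range (p + 1), d l| ≤ δ := by
      calc |∑ l ∈ Finset.range (p + 1), d l| ≤ ∑ l ∈ Finset.range (p + 1), |d l| :=
            Finset.abs_sum_le_sum_abs _ _
        _ ≤ ∑ _l ∈ Finset.range (p + 1), L / n := Finset.sum_le_sum fun i _ => hdb i
        _ = (p + 1 : ℕ) * (L / n) := by rw [Finset.sum_const, Finset.card_range, nsmul_eq_mul]
        _ ≤ m * (L / n) := by gcongr; omega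
        _ = δ := by rw [hδ]; ring
    have h2 : |(if l ≤ p then δ * (σ : ℝ) else 0)| ≤ δ := by
      split_ifs
      · rw [abs_mul, hσ1, mul_one, abs_of_nonneg hδ0]
      · simpa using hδ0
    rw [hsum p]
    simp only [pat]
    rw [add_sub_add_left_eq_sub]
    have h1' := abs_le.mp h1
    have h2' := abs_le.mp h2
    exact abs_le.mpr ⟨by linarith, by linarith⟩

lemma sum_range_blocks (f : ℕ → ℝ) (m J : ℕ) :
    ∑ i ∈ Finset.range (J * m), f i
      = ∑ B ∈ Finset.range J, ∑ p ∈ Finset.range m, f (B * m + p) := by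
  induction J with
  | zero => simp
  | succ J ih => rw [Finset.sum_range_succ, ← ih, add_mul, one_mul, Finset.sum_range_add]

/-- The vector on `{0, …, n - 1}` obtained by gluing the patterns coded by `c` on consecutive
blocks of length `m`. -/
def glue (n m J : ℕ) (δ : ℝ) (c : Fin (J + 1) → ℤ × ℕ × ℤ) (i : ℕ) : ℝ :=
  pat n δ (c (Fin.ofNat (J + 1) (i / m))) (i % m)

/-- The net: for every slowly varying `h` and every linear functional `W` there is a member of
a finite family that dominates `h` for this functional and is uniformly close to `h`. -/
lemma net_pattern (n m J G : ℕ) (hn : 0 < n) (hm : 0 < m) (hJ : n ≤ (J + 1) * m)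
    (L R : ℝ) (hL : 1 ≤ L) (hG : R * n + 1 ≤ G) (W h : ℕ → ℝ) (hW : ∀ i, n ≤ i → W i = 0)
    (hh0 : ∀ i < n, |h i| ≤ R) (hh : ∀ i, i + 1 < n → |h (i + 1) - h i| ≤ L / n) :
    ∃ c ∈ Fintype.piFinset (fun _ : Fin (J + 1) => codes G m),
      ∑ i ∈ Finset.range n, W i * h i ≤
        ∑ i ∈ Finset.range n, W i * glue n m J (L * m / n) c i ∧
      ∀ i < n, |glue n m J (L * m / n) c i - h i| ≤ 2 * (L * m / n) := by
  have hn0 : (0 : ℝ) < n := by exact_mod_cast hn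
  -- Freezing `h` at its last entry makes the hypotheses hold on an incomplete last block.
  have hb : ∀ B : Fin (J + 1), ∃ q ∈ codes G m,
      ∑ p ∈ Finset.range m, W (B * m + p) * h (min (B * m + p) (n - 1)) ≤
        ∑ p ∈ Finset.range m, W (B * m + p) * pat n (L * m / n) q p ∧
      ∀ p < m, |pat n (L * m / n) q p - h (min (B * m + p) (n - 1))| ≤ 2 * (L * m / n) := by
    intro B
    refine block_pattern n m G hn hm L R hL hG (fun p => W (B * m + p))
      (fun p => h (min (B * m + p) (n - 1))) (hh0 _ (by omega)) fun p => ?_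
    by_cases hp : B * m + p + 1 < n
    · have e1 : min (B * m + (p + 1)) (n - 1) = B * m + p + 1 := by omega
      have e2 : min (B * m + p) (n - 1) = B * m + p := by omega
      simp only [e1, e2]
      exact hh _ hp
    · have e1 : min (B * m + (p + 1)) (n - 1) = n - 1 := by omega
      have e2 : min (B * m + p) (n - 1) = n - 1 := by omega
      simp only [e1, e2, sub_self, abs_zero]
      positivity
  choose c hc1 hc2 hc3 using hb
  have hext : ∀ f : ℕ → ℝ, ∑ i ∈ Finset.range n, W i * f i
      = ∑ B ∈ Finset.range (J + 1), ∑ p ∈ Finset.range m, W (B * m + p) * f (B * m + p) := by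
    intro f
    rw [← sum_range_blocks (fun i => W i * f i)]
    refine Finset.sum_subset (Finset.range_mono hJ) fun i _ hi => ?_
    rw [hW i (by simpa using hi), zero_mul]
  have hdiv : ∀ B p, p < m → (B * m + p) / m = B ∧ (B * m + p) % m = p := by
    intro B p hp
    rw [mul_comm, Nat.mul_add_div hm, Nat.mul_add_mod, Nat.div_eq_of_lt hp, Nat.mod_eq_of_lt hp]
    simp
  have hof : ∀ B : Fin (J + 1), Fin.ofNat (J + 1) (B : ℕ) = B := by
    intro B
    ext
    simp
  refine ⟨c, Fintype.mem_piFinset.mpr hc1, ?_, ?_⟩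
  · rw [hext, hext, ← Fin.sum_univ_eq_sum_range
      (fun B => ∑ p ∈ Finset.range m, W (B * m + p) * h (B * m + p)),
      ← Fin.sum_univ_eq_sum_range
      (fun B => ∑ p ∈ Finset.range m, W (B * m + p) * glue n m J (L * m / n) c (B * m + p))]
    refine Finset.sum_le_sum fun B _ => ?_
    refine le_trans (le_of_eq ?_) ((hc2 B).trans (le_of_eq ?_))
    · refine Finset.sum_congr rfl fun p _ => ?_
      by_cases hp : B * m + p < n
      · rw [min_eq_left (by omega)]
      · rw [hW _ (by omega), zero_mul, zero_mul]
    · refine Finset.sum_congr rfl fun p hp => ?_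
      obtain ⟨e1, e2⟩ := hdiv B p (Finset.mem_range.mp hp)
      rw [glue, e1, e2, hof]
  · intro i hi
    have hB : i / m < J + 1 := Nat.div_lt_of_lt_mul (by rw [mul_comm]; omega)
    have h1 := hc3 ⟨i / m, hB⟩ (i % m) (Nat.mod_lt _ hm)
    have e : i / m * m + i % m = i := Nat.div_add_mod' i m
    simp only [e] at h1
    rw [min_eq_left (by omega)] at h1
    rw [glue]
    have e2 : Fin.ofNat (J + 1) (i / m) = ⟨i / m, hB⟩ := hof ⟨i / m, hB⟩
    rw [e2]
    exact h1

/-! ### Local variances of Lipschitz volatilities -/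

lemma memX_sq_lip {κ K M : ℝ} {s : ℝ → ℝ} (hκ : 0 < κ) (hs : memX κ K M s)
    {x y : ℝ} (hx : x ∈ Set.Icc (0 : ℝ) 1) (hy : y ∈ Set.Icc (0 : ℝ) 1) :
    |s x ^ 2 - s y ^ 2| ≤ 2 * K * M * |x - y| := by
  have h := Convex.norm_image_sub_le_of_norm_derivWithin_le hs.2.1
    (fun u hu => by simpa using hs.2.2 u hu) (convex_Icc 0 1) hy hx
  rw [Real.norm_eq_abs, Real.norm_eq_abs] at h
  have h1 := hs.1 x hx
  have h2 := hs.1 y hy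
  have h3 : |s x + s y| ≤ 2 * K := by
    rw [abs_of_nonneg (by linarith [h1.1, h2.1])]; linarith [h1.2, h2.2]
  calc |s x ^ 2 - s y ^ 2| = |s x + s y| * |s x - s y| := by rw [← abs_mul]; congr 1; ring
    _ ≤ 2 * K * (M * |x - y|) := mul_le_mul h3 h (abs_nonneg _) ((abs_nonneg _).trans h3)
    _ = _ := by ring

lemma memX_sq_intervalIntegrable {κ K M : ℝ} {s : ℝ → ℝ} (hs : memX κ K M s) {a b : ℝ}
    (ha : a ∈ Set.Icc (0 : ℝ) 1) (hb : b ∈ Set.Icc (0 : ℝ) 1) :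
    IntervalIntegrable (fun u => s u ^ 2) volume a b :=
  ((hs.2.1.continuousOn.mono (Set.uIcc_subset_Icc ha hb)).pow 2).intervalIntegrable

lemma cell_mem {n i : ℕ} (hi : i < n) {u : ℝ}
    (hu : u ∈ Set.Icc ((i : ℝ) / n) (((i : ℝ) + 1) / n)) : u ∈ Set.Icc (0 : ℝ) 1 := by
  have hn0 : (0 : ℝ) < n := by exact_mod_cast (by omega : 0 < n)
  have hi' : (i : ℝ) + 1 ≤ n := by exact_mod_cast hi
  refine ⟨le_trans (by positivity) hu.1, hu.2.trans ?_⟩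
  rw [div_le_one hn0]
  exact hi'

lemma vin_succ (s : ℝ → ℝ) (n i : ℕ) :
    vin s n (i + 1) = ∫ u in ((i : ℝ) / n)..(((i : ℝ) + 1) / n), s u ^ 2 := by
  simp [vin]

lemma vin_close {κ K M : ℝ} {s : ℝ → ℝ} (hκ : 0 < κ) (hK : 0 < K) (hM : 0 < M)
    (hs : memX κ K M s) {n i : ℕ} (hi : i < n) {u : ℝ}
    (hu : u ∈ Set.Icc ((i : ℝ) / n) (((i : ℝ) + 1) / n)) :
    |n * vin s n (i + 1) - s u ^ 2| ≤ 2 * K * M / n := by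
  have hn0 : (0 : ℝ) < n := by exact_mod_cast (by omega : 0 < n)
  have hle : (i : ℝ) / n ≤ ((i : ℝ) + 1) / n := by gcongr; linarith
  have hlen : ((i : ℝ) + 1) / n - (i : ℝ) / n = 1 / n := by field_simp; ring
  have hint := memX_sq_intervalIntegrable hs (cell_mem hi (Set.left_mem_Icc.mpr hle))
    (cell_mem hi (Set.right_mem_Icc.mpr hle))
  have e : n * vin s n (i + 1) - s u ^ 2
      = n * ∫ x in ((i : ℝ) / n)..(((i : ℝ) + 1) / n), (s x ^ 2 - s u ^ 2) := by
    rw [intervalIntegral.integral_sub hint intervalIntegrable_const,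
      intervalIntegral.integral_const, hlen, vin_succ, smul_eq_mul]
    field_simp
  have hb : ‖∫ x in ((i : ℝ) / n)..(((i : ℝ) + 1) / n), (s x ^ 2 - s u ^ 2)‖
      ≤ 2 * K * M / n * |((i : ℝ) + 1) / n - (i : ℝ) / n| := by
    refine intervalIntegral.norm_integral_le_of_norm_le_const fun x hx => ?_
    rw [Set.uIoc_of_le hle] at hx
    have hx' : x ∈ Set.Icc ((i : ℝ) / n) (((i : ℝ) + 1) / n) := ⟨hx.1.le, hx.2⟩
    refine (memX_sq_lip hκ hs (cell_mem hi hx') (cell_mem hi hu)).trans ?_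
    have : |x - u| ≤ 1 / n := by
      rw [← hlen, abs_le]
      constructor <;> linarith [hx'.1, hx'.2, hu.1, hu.2]
    calc 2 * K * M * |x - u| ≤ 2 * K * M * (1 / n) := by gcongr
      _ = _ := by ring
  rw [e, abs_mul, abs_of_pos hn0, ← Real.norm_eq_abs]
  rw [hlen, abs_of_pos (by positivity)] at hb
  calc n * ‖_‖ ≤ n * (2 * K * M / n * (1 / n)) := by gcongr
    _ = _ := by field_simp

lemma vin_bounds {κ K M : ℝ} {s : ℝ → ℝ} (hκ : 0 < κ) (hs : memX κ K M s)
    {n i : ℕ} (hi : i < n) :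
    κ ^ 2 ≤ n * vin s n (i + 1) ∧ n * vin s n (i + 1) ≤ K ^ 2 := by
  have hn0 : (0 : ℝ) < n := by exact_mod_cast (by omega : 0 < n)
  have hle : (i : ℝ) / n ≤ ((i : ℝ) + 1) / n := by gcongr; linarith
  have hlen : ((i : ℝ) + 1) / n - (i : ℝ) / n = 1 / n := by field_simp; ring
  have hint := memX_sq_intervalIntegrable hs (cell_mem hi (Set.left_mem_Icc.mpr hle))
    (cell_mem hi (Set.right_mem_Icc.mpr hle))
  have hc : ∀ c : ℝ, ∫ _x in ((i : ℝ) / n)..(((i : ℝ) + 1) / n), c = 1 / n * c := by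
    intro c; rw [intervalIntegral.integral_const, hlen, smul_eq_mul]
  have h1 : 1 / n * κ ^ 2 ≤ vin s n (i + 1) := by
    rw [vin_succ, ← hc]
    refine intervalIntegral.integral_mono_on hle intervalIntegrable_const hint fun x hx => ?_
    have := (hs.1 x (cell_mem hi hx)).1
    gcongr
  have h2 : vin s n (i + 1) ≤ 1 / n * K ^ 2 := by
    rw [vin_succ, ← hc]
    refine intervalIntegral.integral_mono_on hle hint intervalIntegrable_const fun x hx => ?_
    have := hs.1 x (cell_mem hi hx)
    have h0 : 0 ≤ s x := hκ.le.trans this.1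
    have := this.2
    gcongr
  constructor
  · calc κ ^ 2 = n * (1 / n * κ ^ 2) := by field_simp
      _ ≤ _ := by gcongr
  · calc _ ≤ n * (1 / n * K ^ 2) := by gcongr
      _ = _ := by field_simp

/-- Relative deviation `v_{i+1,n}(s0) / v_{i+1,n}(s) - 1` of the local variances
(cells are numbered from `0`). -/
def relDev (s0 s : ℝ → ℝ) (n i : ℕ) : ℝ := vin s0 n (i + 1) / vin s n (i + 1) - 1

lemma vin_pos {κ K M : ℝ} {s : ℝ → ℝ} (hκ : 0 < κ) (hs : memX κ K M s)
    {n i : ℕ} (hi : i < n) : 0 < vin s n (i + 1) := by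
  have hn0 : (0 : ℝ) < n := by exact_mod_cast (by omega : 0 < n)
  have h := (vin_bounds hκ hs hi).1
  have : 0 < n * vin s n (i + 1) := lt_of_lt_of_le (by positivity) h
  exact (mul_pos_iff_of_pos_left hn0).mp this

lemma relDev_eq (s0 s : ℝ → ℝ) {n i : ℕ} (hi : i < n) :
    relDev s0 s n i = (n * vin s0 n (i + 1)) / (n * vin s n (i + 1)) - 1 := by
  have hn0 : (n : ℝ) ≠ 0 := by exact_mod_cast (by omega : n ≠ 0)
  rw [relDev, mul_div_mul_left _ _ hn0]

lemma relDev_bounds {κ K M : ℝ} {s0 s : ℝ → ℝ} (hκ : 0 < κ) (hs0 : memX κ K M s0)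
    (hs : memX κ K M s) {n i : ℕ} (hi : i < n) :
    0 < 1 + relDev s0 s n i ∧ 1 + relDev s0 s n i ≤ K ^ 2 / κ ^ 2 := by
  have h0 := vin_bounds hκ hs0 hi
  have h1 := vin_bounds hκ hs hi
  have hp0 := vin_pos hκ hs0 hi
  have hp1 := vin_pos hκ hs hi
  constructor
  · rw [relDev]; have : 0 < vin s0 n (i + 1) / vin s n (i + 1) := by positivity
    linarith
  · rw [relDev_eq _ _ hi]
    have : n * vin s0 n (i + 1) / (n * vin s n (i + 1)) ≤ K ^ 2 / κ ^ 2 :=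
      div_le_div₀ (by positivity) h0.2 (by positivity) h1.1
    linarith

lemma relDev_step {κ K M : ℝ} {s0 s : ℝ → ℝ} (hκ : 0 < κ) (hK : 0 < K) (hM : 0 < M)
    (hs0 : memX κ K M s0) (hs : memX κ K M s) {n i : ℕ} (hi : i + 1 < n) :
    |relDev s0 s n (i + 1) - relDev s0 s n i| ≤ (8 * K ^ 3 * M / κ ^ 4) / n := by
  have hn0 : (0 : ℝ) < n := by exact_mod_cast (by omega : 0 < n)
  have hi' : i < n := by omega
  have hstep : ∀ t : ℝ → ℝ, memX κ K M t →
      |n * vin t n (i + 1 + 1) - n * vin t n (i + 1)| ≤ 4 * K * M / n := by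
    intro t ht
    have hm1 : ((i : ℝ) + 1) / n ∈ Set.Icc ((i : ℝ) / n) (((i : ℝ) + 1) / n) :=
      Set.right_mem_Icc.mpr (by gcongr; linarith)
    have hm2 : ((i : ℝ) + 1) / n ∈ Set.Icc (((i + 1 : ℕ) : ℝ) / n) ((((i + 1 : ℕ) : ℝ) + 1) / n) := by
      push_cast
      exact Set.left_mem_Icc.mpr (by gcongr; linarith)
    have h1 := abs_le.mp (vin_close hκ hK hM ht hi' hm1)
    have h2 := abs_le.mp (vin_close hκ hK hM ht hi hm2)
    have e : 4 * K * M / n = 2 * K * M / n + 2 * K * M / n := by ring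
    rw [e, abs_le]
    constructor <;> linarith [h1.1, h1.2, h2.1, h2.2]
  rw [relDev_eq _ _ hi, relDev_eq _ _ hi']
  have a0 := vin_bounds hκ hs0 hi'
  have a := vin_bounds hκ hs hi'
  have b0 := vin_bounds hκ hs0 hi
  have b := vin_bounds hκ hs hi
  have d0 := hstep s0 hs0
  have d := hstep s hs
  generalize (n : ℝ) * vin s0 n (i + 1 + 1) = x0' at *
  generalize (n : ℝ) * vin s n (i + 1 + 1) = x' at *
  generalize (n : ℝ) * vin s0 n (i + 1) = x0 at *
  generalize (n : ℝ) * vin s n (i + 1) = x at *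
  have hκ2 : 0 < κ ^ 2 := by positivity
  have hx : 0 < x := hκ2.trans_le a.1
  have hx' : 0 < x' := hκ2.trans_le b.1
  have e : x0' / x' - 1 - (x0 / x - 1) = ((x0' - x0) * x - x0 * (x' - x)) / (x' * x) := by
    field_simp; ring
  rw [e, abs_div, abs_of_pos (mul_pos hx' hx)]
  have hnum : |(x0' - x0) * x - x0 * (x' - x)| ≤ 8 * K ^ 3 * M / n := by
    have h1 : |(x0' - x0) * x| ≤ 4 * K * M / n * K ^ 2 := by
      rw [abs_mul, abs_of_pos hx]
      exact mul_le_mul d0 a.2 hx.le (by positivity)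
    have h2 : |x0 * (x' - x)| ≤ 4 * K * M / n * K ^ 2 := by
      rw [abs_mul, abs_of_pos (hκ2.trans_le a0.1), mul_comm]
      exact mul_le_mul d a0.2 (hκ2.trans_le a0.1).le (by positivity)
    have e2 : 8 * K ^ 3 * M / n = 4 * K * M / n * K ^ 2 + 4 * K * M / n * K ^ 2 := by ring
    have h1' := abs_le.mp h1
    have h2' := abs_le.mp h2
    rw [e2]
    exact abs_le.mpr ⟨by linarith, by linarith⟩
  have hden : κ ^ 4 ≤ x' * x := by
    calc κ ^ 4 = κ ^ 2 * κ ^ 2 := by ring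
      _ ≤ _ := mul_le_mul b.1 a.1 hκ2.le hx'.le
  calc _ ≤ (8 * K ^ 3 * M / n) / κ ^ 4 := div_le_div₀ (by positivity) hnum (by positivity) hden
    _ = _ := by ring

/-- The squared `L²` distance of two volatilities is controlled by the discrete `ℓ²` norm of the
relative deviations of their local variances. -/
lemma l2_le {κ K M : ℝ} {s0 s : ℝ → ℝ} (hκ : 0 < κ) (hK : 0 < K) (hM : 0 < M)
    (hs0 : memX κ K M s0) (hs : memX κ K M s) {n : ℕ} (hn : 0 < n) :
    n * l2DistSq s s0 ≤ K ^ 4 / (2 * κ ^ 2) * ∑ i ∈ Finset.range n, relDev s0 s n i ^ 2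
      + 8 * K ^ 2 * M ^ 2 / κ ^ 2 / n := by
  have hn0 : (0 : ℝ) < n := by exact_mod_cast hn
  have hcont : ∀ a b : ℝ, a ∈ Set.Icc (0 : ℝ) 1 → b ∈ Set.Icc (0 : ℝ) 1 →
      IntervalIntegrable (fun u => (s u - s0 u) ^ 2) volume a b := fun a b ha hb =>
    (((hs.2.1.continuousOn.mono (Set.uIcc_subset_Icc ha hb)).sub
      (hs0.2.1.continuousOn.mono (Set.uIcc_subset_Icc ha hb))).pow 2).intervalIntegrable
  have hle : ∀ i : ℕ, (i : ℝ) / n ≤ ((i : ℝ) + 1) / n := fun i => by gcongr; linarith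
  have hcell : ∀ i : ℕ, i < n →
      IntervalIntegrable (fun u => (s u - s0 u) ^ 2) volume ((i : ℝ) / n) (((i : ℝ) + 1) / n) :=
    fun i hi => hcont _ _ (cell_mem hi (Set.left_mem_Icc.mpr (hle i)))
      (cell_mem hi (Set.right_mem_Icc.mpr (hle i)))
  have hsplit : l2DistSq s s0
      = ∑ i ∈ Finset.range n, ∫ u in ((i : ℝ) / n)..(((i : ℝ) + 1) / n), (s u - s0 u) ^ 2 := by
    have := intervalIntegral.sum_integral_adjacent_intervals (μ := volume)
      (f := fun u => (s u - s0 u) ^ 2) (a := fun i : ℕ => (i : ℝ) / n) (n := n)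
      (fun i hi => by simpa using hcell i hi)
    simp only [Nat.cast_zero, zero_div, div_self hn0.ne', Nat.cast_add, Nat.cast_one] at this
    rw [l2DistSq, this]
  have hbound : ∀ i ∈ Finset.range n,
      ∫ u in ((i : ℝ) / n)..(((i : ℝ) + 1) / n), (s u - s0 u) ^ 2
        ≤ 1 / n * (K ^ 4 / (2 * κ ^ 2) * relDev s0 s n i ^ 2
            + 8 * K ^ 2 * M ^ 2 / κ ^ 2 / n ^ 2) := by
    intro i hi
    have hi := Finset.mem_range.mp hi
    have hlen : ((i : ℝ) + 1) / n - (i : ℝ) / n = 1 / n := by field_simp; ring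
    have hc : ∀ c : ℝ, ∫ _x in ((i : ℝ) / n)..(((i : ℝ) + 1) / n), c = 1 / n * c := by
      intro c; rw [intervalIntegral.integral_const, hlen, smul_eq_mul]
    rw [← hc]
    refine intervalIntegral.integral_mono_on (hle i) (hcell i hi) intervalIntegrable_const
      fun u hu => ?_
    have c0 := vin_close hκ hK hM hs0 hi hu
    have c1 := vin_close hκ hK hM hs hi hu
    have m0 := hs0.1 u (cell_mem hi hu)
    have m1 := hs.1 u (cell_mem hi hu)
    have b := vin_bounds hκ hs hi
    rw [relDev_eq _ _ hi]
    generalize (n : ℝ) * vin s0 n (i + 1) = x0 at *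
    generalize (n : ℝ) * vin s n (i + 1) = x at *
    have hx : 0 < x := lt_of_lt_of_le (by positivity) b.1
    set h := x0 / x - 1 with hh
    have hxh : x0 - x = x * h := by rw [hh]; field_simp
    have h1 : |x0 - x| ≤ K ^ 2 * |h| := by
      rw [hxh, abs_mul, abs_of_pos hx]; gcongr; exact b.2
    have h2 : |s u ^ 2 - s0 u ^ 2| ≤ K ^ 2 * |h| + 4 * K * M / n := by
      have e : 4 * K * M / n = 2 * K * M / n + 2 * K * M / n := by ring
      have c0 := abs_le.mp c0
      have c1 := abs_le.mp c1
      have h1 := abs_le.mp h1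
      rw [e]
      exact abs_le.mpr ⟨by linarith, by linarith⟩
    have h3 : 2 * κ * |s u - s0 u| ≤ |s u ^ 2 - s0 u ^ 2| := by
      have : s u ^ 2 - s0 u ^ 2 = (s u + s0 u) * (s u - s0 u) := by ring
      rw [this, abs_mul]
      gcongr
      rw [abs_of_nonneg (by linarith [m0.1, m1.1])]
      linarith [m0.1, m1.1]
    have h4 : (2 * κ * |s u - s0 u|) ^ 2 ≤ 2 * (K ^ 2 * |h|) ^ 2 + 2 * (4 * K * M / n) ^ 2 := by
      have h5 : 2 * κ * |s u - s0 u| ≤ K ^ 2 * |h| + 4 * K * M / n := h3.trans h2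
      calc _ ≤ (K ^ 2 * |h| + 4 * K * M / n) ^ 2 := by gcongr
        _ ≤ _ := by nlinarith [sq_nonneg (K ^ 2 * |h| - 4 * K * M / n)]
    rw [mul_pow, sq_abs, mul_pow (K ^ 2), sq_abs] at h4
    have h6 : (s u - s0 u) ^ 2 ≤ (2 * ((K ^ 2) ^ 2 * h ^ 2) + 2 * (4 * K * M / n) ^ 2)
        / (2 * κ) ^ 2 := by
      rw [le_div_iff₀ (by positivity)]; linarith
    refine h6.trans (le_of_eq ?_)
    field_simp
    ring
  rw [hsplit]
  refine (mul_le_mul_of_nonneg_left (Finset.sum_le_sum hbound) hn0.le).trans (le_of_eq ?_)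
  rw [← Finset.mul_sum, Finset.sum_add_distrib, Finset.sum_const, Finset.card_range,
    nsmul_eq_mul, ← Finset.mul_sum]
  field_simp

/-! ### The likelihood ratio -/

lemma log_le_quad {r R : ℝ} (hr : 0 < r) (hR : r ≤ R) :
    Real.log r ≤ (r - 1) - (r - 1) ^ 2 / (2 * (R + 1)) := by
  -- `log r = 2 log √r ≤ 2 (√r - 1) = (r - 1) - (√r - 1)²`.
  set q := √r with hq
  have hq0 : 0 < q := Real.sqrt_pos.mpr hr
  have hqq : q ^ 2 = r := Real.sq_sqrt hr.le
  have h1 : Real.log r ≤ 2 * (q - 1) := by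
    rw [← hqq, Real.log_pow]
    push_cast
    linarith [Real.log_le_sub_one_of_pos hq0]
  have h2 : (r - 1) ^ 2 / (2 * (R + 1)) ≤ (q - 1) ^ 2 := by
    rw [div_le_iff₀ (by linarith)]
    have h3 : (r - 1) ^ 2 = (q - 1) ^ 2 * (q + 1) ^ 2 := by rw [← hqq]; ring
    rw [h3]
    have h4 : (q + 1) ^ 2 ≤ 2 * (R + 1) := by nlinarith [sq_nonneg (q - 1)]
    gcongr
  nlinarith

lemma density_ratio {v0 v y : ℝ} (hv0 : 0 < v0) (hv : 0 < v) :
    gaussDensity v y / gaussDensity v0 y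
      = Real.exp (1 / 2 * (Real.log (v0 / v) - (v0 / v - 1))
          - 1 / 2 * ((y ^ 2 / v0 - 1) * (v0 / v - 1))) := by
  have e1 : Real.exp (1 / 2 * (Real.log (v0 / v) - (v0 / v - 1))
          - 1 / 2 * ((y ^ 2 / v0 - 1) * (v0 / v - 1)))
      = Real.exp (1 / 2 * Real.log (v0 / v)) *
        (Real.exp (-y ^ 2 / (2 * v)) / Real.exp (-y ^ 2 / (2 * v0))) := by
    rw [← Real.exp_sub, ← Real.exp_add]
    congr 1
    field_simp
    ring
  have e2 : Real.exp (1 / 2 * Real.log (v0 / v)) = √(2 * π * v0) / √(2 * π * v) := by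
    rw [← Real.sqrt_div (by positivity), mul_div_mul_left _ _ (by positivity),
      Real.sqrt_eq_rpow, Real.rpow_def_of_pos (by positivity), mul_comm]
  have h1 : √(2 * π * v0) ≠ 0 := by positivity
  have h2 : √(2 * π * v) ≠ 0 := by positivity
  rw [e1, e2, gaussDensity, gaussDensity]
  field_simp

lemma likRatio_le {κ K M : ℝ} {s0 s : ℝ → ℝ} (hκ : 0 < κ)
    (hs0 : memX κ K M s0) (hs : memX κ K M s) {n : ℕ} (y : Fin n → ℝ) :
    likRatio s0 s n y ≤ Real.exp
      (-(1 / (4 * (K ^ 2 / κ ^ 2 + 1))) * ∑ i : Fin n, relDev s0 s n i ^ 2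
        - 1 / 2 * ∑ i : Fin n, (y i ^ 2 / vin s0 n (i + 1) - 1) * relDev s0 s n i) := by
  rw [Finset.mul_sum, Finset.mul_sum, ← Finset.sum_sub_distrib, Real.exp_sum]
  have hnn : ∀ v z : ℝ, 0 ≤ gaussDensity v z := fun v z => by unfold gaussDensity; positivity
  refine Finset.prod_le_prod (fun i _ => div_nonneg (hnn _ _) (hnn _ _)) fun i _ => ?_
  rw [density_ratio (vin_pos hκ hs0 i.2) (vin_pos hκ hs i.2)]
  apply Real.exp_le_exp.mpr
  have hb := relDev_bounds hκ hs0 hs i.2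
  have h := log_le_quad hb.1 hb.2
  have e : 1 + relDev s0 s n i - 1 = relDev s0 s n i := by ring
  have e3 : vin s0 n (i + 1) / vin s n (i + 1) - 1 = relDev s0 s n i := rfl
  have e4 : vin s0 n (i + 1) / vin s n (i + 1) = 1 + relDev s0 s n i := by rw [← e3]; ring
  rw [e] at h
  rw [e3, e4]
  have e5 : 1 / (4 * (K ^ 2 / κ ^ 2 + 1)) * relDev s0 s n i ^ 2
      = 1 / 2 * (relDev s0 s n i ^ 2 / (2 * (K ^ 2 / κ ^ 2 + 1))) := by
    field_simp; ring
  rw [neg_mul, e5]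
  linarith

/-- Non-asymptotic form of the deviation bound: a union bound over the net of patterns,
with a Chernoff bound for every pattern. -/
lemma core_bound {κ K M : ℝ} (hκ : 0 < κ) (hκK : κ < K) (hM : 0 < M) {s0 : ℝ → ℝ}
    (hs0 : memX κ K M s0) {n m J G : ℕ} (hn : 0 < n) (hm : 0 < m) (hJ : n ≤ (J + 1) * m)
    {L ε c c2 : ℝ} (hL : 1 ≤ L) (hL2 : 8 * K ^ 3 * M / κ ^ 4 ≤ L) (hε : 0 < ε)
    (hG : K ^ 2 / κ ^ 2 * n + 1 ≤ G) (hδ : L * m / n ≤ 1 / 2)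
    (hc : c = 1 / (4 * (K ^ 2 / κ ^ 2 + 1)))
    (H : c / (4 * (K ^ 4 / (2 * κ ^ 2))) * (n * ε ^ 2) ≤
      c / 2 * ((n * ε ^ 2 - 8 * K ^ 2 * M ^ 2 / κ ^ 2 / n) / (K ^ 4 / (2 * κ ^ 2)))
        - 2 * c * (n * (L * m / n) ^ 2) - c2 * (n * ε ^ 2)) :
    jointLaw s0 n {y : Fin n → ℝ | ∃ s : ℝ → ℝ, memX κ K M s ∧ ε ≤ √(l2DistSq s s0) ∧
        Real.exp (-(c2 * (n * ε ^ 2))) ≤ likRatio s0 s n y}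
      ≤ ENNReal.ofReal ((((2 * G + 1) * (m * 2) : ℕ) : ℝ) ^ (J + 1) *
          Real.exp (-(c ^ 2 / (16 * (K ^ 4 / (2 * κ ^ 2))) * (n * ε ^ 2)))) := by
  have hK : 0 < K := hκ.trans hκK
  set R := K ^ 2 / κ ^ 2 with hR
  set A1 := K ^ 4 / (2 * κ ^ 2) with hA1
  set A2 := 8 * K ^ 2 * M ^ 2 / κ ^ 2 with hA2
  set E := (n : ℝ) * ε ^ 2 with hE
  set δ := L * m / n with hδd
  have hn0 : (0 : ℝ) < n := by exact_mod_cast hn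
  have hδ0 : 0 ≤ δ := by positivity
  have hA10 : 0 < A1 := by positivity
  have hR1 : 1 ≤ R := by
    rw [hR, one_le_div (by positivity)]; gcongr
  have hc0 : 0 < c := by rw [hc]; positivity
  have hcR : c * (R + 1) = 1 / 4 := by rw [hc]; field_simp
  set v : Fin n → NNReal := fun i => Real.toNNReal (vin s0 n (i.1 + 1)) with hv
  have hvv : ∀ i : Fin n, ((v i : NNReal) : ℝ) = vin s0 n (i.1 + 1) := fun i =>
    Real.coe_toNNReal _ (vin_pos hκ hs0 i.2).le
  have hv0 : ∀ i, v i ≠ 0 := fun i => (Real.toNNReal_pos.mpr (vin_pos hκ hs0 i.2)).ne'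
  -- Only the members of the net that stay in the range of the Chernoff bound are kept.
  set I := (Fintype.piFinset (fun _ : Fin (J + 1) => codes G m)).filter
    (fun a => ∀ i : Fin n, |glue n m J δ a i| ≤ R + 1) with hI
  set x : (Fin (J + 1) → ℤ × ℕ × ℤ) → ℝ := fun a =>
    c / 4 * (c / 4 * ∑ i : Fin n, glue n m J δ a i ^ 2 + c / (4 * A1) * E) with hx
  have hcover : {y : Fin n → ℝ | ∃ s : ℝ → ℝ, memX κ K M s ∧ ε ≤ √(l2DistSq s s0) ∧
        Real.exp (-(c2 * E)) ≤ likRatio s0 s n y}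
      ⊆ ⋃ a ∈ I, {y : Fin n → ℝ |
          x a ≤ ∑ i : Fin n, (c / 8 * glue n m J δ a i) * (y i ^ 2 / v i - 1)} := by
    rintro y ⟨s, hs, hd, hlik⟩
    set W : ℕ → ℝ := fun i =>
      if hi : i < n then (y ⟨i, hi⟩ ^ 2 / vin s0 n (i + 1) - 1) else 0 with hW
    have hWi : ∀ i : Fin n, W i = y i ^ 2 / vin s0 n (i + 1) - 1 := fun i => by simp [hW]
    have hhb : ∀ i < n, |relDev s0 s n i| ≤ R := fun i hi => by
      have := relDev_bounds hκ hs0 hs hi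
      exact abs_le.mpr ⟨by linarith [this.1], by linarith [this.2]⟩
    obtain ⟨a, ha1, ha2, ha3⟩ := net_pattern n m J G hn hm hJ L R hL hG W
      (fun i => -relDev s0 s n i) (fun i hi => by simp [hW, not_lt.mpr hi])
      (fun i hi => by rw [abs_neg]; exact hhb i hi)
      (fun i hi => by
        rw [neg_sub_neg, abs_sub_comm]
        exact (relDev_step hκ hK hM hs0 hs hi).trans (by gcongr))
    rw [← hδd] at ha2 ha3
    have haI : a ∈ I := by
      refine Finset.mem_filter.mpr ⟨ha1, fun i => ?_⟩
      have h1 := abs_le.mp (ha3 i i.2)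
      have h2 := abs_le.mp (hhb i i.2)
      exact abs_le.mpr ⟨by linarith [h1.1, h2.2], by linarith [h1.2, h2.1]⟩
    refine Set.mem_biUnion haI ?_
    simp only [Set.mem_ofPred_eq, hvv]
    have hlog := Real.exp_le_exp.mp (hlik.trans (likRatio_le hκ hs0 hs y))
    rw [← hR, ← hc] at hlog
    have hl2 := l2_le hκ hK hM hs0 hs hn
    rw [← hA1, ← hA2, ← Fin.sum_univ_eq_sum_range (fun i => relDev s0 s n i ^ 2)] at hl2
    have hdE : E ≤ n * l2DistSq s s0 := by
      have := (Real.le_sqrt' hε).mp hd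
      rw [hE]; gcongr
    rw [← Fin.sum_univ_eq_sum_range (fun i => W i * -relDev s0 s n i),
      ← Fin.sum_univ_eq_sum_range (fun i => W i * glue n m J δ a i)] at ha2
    simp only [hWi, mul_neg, Finset.sum_neg_distrib] at ha2
    have hsq : ∑ i : Fin n, glue n m J δ a i ^ 2
        ≤ 2 * ∑ i : Fin n, relDev s0 s n i ^ 2 + 8 * (n * δ ^ 2) := by
      have : ∀ i : Fin n, glue n m J δ a i ^ 2 ≤ 2 * relDev s0 s n i ^ 2 + 8 * δ ^ 2 := by
        intro i
        have h1 := ha3 i i.2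
        have h2 : (glue n m J δ a i - -relDev s0 s n i) ^ 2 ≤ (2 * δ) ^ 2 := sq_le_sq'
          (abs_le.mp h1).1 (abs_le.mp h1).2
        nlinarith [sq_nonneg (glue n m J δ a i + 2 * relDev s0 s n i)]
      calc _ ≤ ∑ i : Fin n, (2 * relDev s0 s n i ^ 2 + 8 * δ ^ 2) :=
            Finset.sum_le_sum fun i _ => this i
        _ = _ := by
            rw [Finset.sum_add_distrib, ← Finset.mul_sum, Finset.sum_const, Finset.card_univ,
              Fintype.card_fin, nsmul_eq_mul]
            ring
    have hsum : ∑ i : Fin n, (c / 8 * glue n m J δ a i) * (y i ^ 2 / vin s0 n (i + 1) - 1)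
        = c / 4 * (1 / 2 * ∑ i : Fin n, (y i ^ 2 / vin s0 n (i + 1) - 1) * glue n m J δ a i) := by
      simp only [Finset.mul_sum]
      refine Finset.sum_congr rfl fun i _ => ?_
      ring
    rw [hsum, hx]
    refine mul_le_mul_of_nonneg_left ?_ (by positivity)
    have hlow : (E - A2 / n) / A1 ≤ ∑ i : Fin n, relDev s0 s n i ^ 2 := by
      rw [div_le_iff₀ hA10]; linarith
    have hlow' := mul_le_mul_of_nonneg_left hlow (by positivity : 0 ≤ c / 2)
    have hsq' := mul_le_mul_of_nonneg_left hsq (by positivity : 0 ≤ c / 4)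
    nlinarith
  have hone : ∀ a ∈ I, jointLaw s0 n {y : Fin n → ℝ |
          x a ≤ ∑ i : Fin n, (c / 8 * glue n m J δ a i) * (y i ^ 2 / v i - 1)}
        ≤ ENNReal.ofReal (Real.exp (-(c ^ 2 / (16 * A1) * E))) := by
    intro a ha
    refine (chernoff v hv0 (fun i => c / 8 * glue n m J δ a i) (fun i => ?_) (x a)).trans
      (ENNReal.ofReal_le_ofReal (Real.exp_le_exp.mpr (le_of_eq ?_)))
    · have := (Finset.mem_filter.mp ha).2 i
      rw [abs_mul, abs_of_pos (by positivity)]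
      calc c / 8 * _ ≤ c / 8 * (R + 1) := by gcongr
        _ = 1 / 8 * (c * (R + 1)) := by ring
        _ ≤ 1 / 4 := by rw [hcR]; norm_num
    · rw [hx]
      simp only [mul_pow, ← Finset.mul_sum]
      field_simp
      ring
  have hcard : (I.card : ℝ) ≤ (((2 * G + 1) * (m * 2) : ℕ) : ℝ) ^ (J + 1) := by
    have h1 : I.card ≤ ((2 * G + 1) * (m * 2)) ^ (J + 1) := by
      refine (Finset.card_filter_le _ _).trans (le_of_eq ?_)
      rw [Fintype.card_piFinset_const, card_codes]
    exact_mod_cast h1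
  calc _ ≤ jointLaw s0 n (⋃ a ∈ I, {y : Fin n → ℝ |
          x a ≤ ∑ i : Fin n, (c / 8 * glue n m J δ a i) * (y i ^ 2 / v i - 1)}) := measure_mono hcover
    _ ≤ ∑ a ∈ I, jointLaw s0 n {y : Fin n → ℝ |
          x a ≤ ∑ i : Fin n, (c / 8 * glue n m J δ a i) * (y i ^ 2 / v i - 1)} :=
        measure_biUnion_finset_le _ _
    _ ≤ ∑ _a ∈ I, ENNReal.ofReal (Real.exp (-(c ^ 2 / (16 * A1) * E))) :=
        Finset.sum_le_sum hone
    _ = ENNReal.ofReal (I.card * Real.exp (-(c ^ 2 / (16 * A1) * E))) := by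
        rw [Finset.sum_const, nsmul_eq_mul, ENNReal.ofReal_mul (by positivity),
          ENNReal.ofReal_natCast]
    _ ≤ _ := ENNReal.ofReal_le_ofReal (by gcongr)

/-! ### Choice of scales and conclusion -/

/-- Blocks of length about `n^(2/3)`, hence about `n^(1/3)` of them: the net then has
log-cardinality of order `n^(1/3) log n`, and the uniform error of the net contributes
a term of order `n^(1/3)`. -/
lemma scales (R L T : ℝ) (hR : 1 ≤ R) (hL : 1 ≤ L) : ∃ N : ℕ, ∀ n : ℕ, N ≤ n → 2 ≤ n ∧
    ∃ m J G : ℕ, 0 < m ∧ n ≤ (J + 1) * m ∧ R * n + 1 ≤ G ∧ L * m / n ≤ 1 / 2 ∧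
      n * (L * m / n) ^ 2 ≤ 4 * L ^ 2 * (n : ℝ) ^ ((1 : ℝ) / 3) ∧
      (((2 * G + 1) * (m * 2) : ℕ) : ℝ) ^ (J + 1)
        ≤ Real.exp (6 * (n : ℝ) ^ ((1 : ℝ) / 3) * Real.log n) ∧
      1 ≤ (n : ℝ) ^ ((1 : ℝ) / 3) ∧ T ≤ Real.log n := by
  have hx : Tendsto (fun n : ℕ => (n : ℝ) ^ ((1 : ℝ) / 3)) atTop atTop :=
    (tendsto_rpow_atTop (by norm_num)).comp tendsto_natCast_atTop_atTop
  have hl : Tendsto (fun n : ℕ => Real.log n) atTop atTop :=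
    Real.tendsto_log_atTop.comp tendsto_natCast_atTop_atTop
  obtain ⟨N, hN⟩ := eventually_atTop.mp ((eventually_ge_atTop 2).and
    ((hx.eventually_ge_atTop (4 * L)).and ((hl.eventually_ge_atTop T).and
      ((tendsto_natCast_atTop_atTop (R := ℝ)).eventually_ge_atTop (8 * R + 20)))))
  refine ⟨N, fun n hn => ?_⟩
  obtain ⟨h2, hx4, hlT, hn8⟩ := hN n hn
  refine ⟨h2, ?_⟩
  have hn0 : (0 : ℝ) < n := by exact_mod_cast (by omega : 0 < n)
  set x := (n : ℝ) ^ ((1 : ℝ) / 3) with hxd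
  have hx3 : x ^ 3 = n := by
    rw [hxd, ← Real.rpow_natCast, ← Real.rpow_mul hn0.le]; norm_num
  have hx1 : 4 ≤ x := by linarith
  have hx0 : 0 < x := by linarith
  set m := ⌈x ^ 2⌉₊ with hmd
  have hm1 : x ^ 2 ≤ m := Nat.le_ceil _
  have hm2 : (m : ℝ) < x ^ 2 + 1 := Nat.ceil_lt_add_one (by positivity)
  have hm2' : (m : ℝ) ≤ 2 * x ^ 2 := by nlinarith
  have hm : 0 < m := Nat.ceil_pos.mpr (by positivity)
  set G := ⌈R * n + 1⌉₊ with hGd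
  have hG1 : R * n + 1 ≤ G := Nat.le_ceil _
  have hG2 : (G : ℝ) < R * n + 1 + 1 := Nat.ceil_lt_add_one (by positivity)
  have hd : L * m / n ≤ 2 * L / x := by
    rw [← hx3, div_le_div_iff₀ (by positivity) hx0]
    calc L * m * x ≤ L * (2 * x ^ 2) * x := by gcongr
      _ = _ := by ring
  refine ⟨m, n / m, G, hm, ?_, hG1, ?_, ?_, ?_, by linarith, hlT⟩
  · have := Nat.lt_div_mul_add (a := n) hm
    rw [add_mul, one_mul]; exact this.le
  · refine hd.trans ?_
    rw [div_le_div_iff₀ hx0 two_pos]; linarith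
  · have h0 : 0 ≤ L * m / n := by positivity
    calc n * (L * m / n) ^ 2 ≤ n * (2 * L / x) ^ 2 := by gcongr
      _ = _ := by rw [← hx3]; field_simp; ring
  · have hlog : 0 ≤ Real.log n := Real.log_nonneg (by linarith)
    have hmn : (m : ℝ) ≤ n := by rw [← hx3]; nlinarith
    have hbase : (((2 * G + 1) * (m * 2) : ℕ) : ℝ) ≤ Real.exp (3 * Real.log n) := by
      have e : Real.exp (3 * Real.log n) = (n : ℝ) ^ 3 := by
        rw [mul_comm, Real.exp_mul, Real.exp_log hn0]; norm_cast
      rw [e]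
      push_cast
      calc (2 * (G : ℝ) + 1) * (m * 2) ≤ ((2 * R + 5) * n) * (n * 2) := by
            gcongr
            nlinarith
        _ = (4 * R + 10) * n ^ 2 := by ring
        _ ≤ n * n ^ 2 := by gcongr; linarith
        _ = _ := by ring
    have hJ : (((n / m : ℕ) : ℝ) + 1) ≤ 2 * x := by
      have h1 : ((n / m : ℕ) : ℝ) ≤ (n : ℝ) / m := Nat.cast_div_le
      have h3 : (n : ℝ) / m ≤ x := by
        rw [div_le_iff₀ (by exact_mod_cast hm), ← hx3]; nlinarith
      linarith
    calc (((2 * G + 1) * (m * 2) : ℕ) : ℝ) ^ (n / m + 1)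
        ≤ Real.exp (3 * Real.log n) ^ (n / m + 1) := by gcongr
      _ = Real.exp ((((n / m : ℕ) : ℝ) + 1) * (3 * Real.log n)) := by
          rw [← Real.exp_nat_mul]; push_cast; rfl
      _ ≤ Real.exp (2 * x * (3 * Real.log n)) := by gcongr
      _ = _ := by ring_nf

lemma one_le_Meps {K ε : ℝ} (hε : 0 < ε) : 1 ≤ Meps K ε := by
  have hne : {m : ℕ | 0 < m ∧ 4 * K ^ 2 ≤ (2 : ℝ) ^ m * ε ^ 2}.Nonempty := by
    have h : Tendsto (fun m : ℕ => (2 : ℝ) ^ m * ε ^ 2) atTop atTop :=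
      (tendsto_pow_atTop_atTop_of_one_lt one_lt_two).atTop_mul_const (by positivity)
    obtain ⟨m, h1, h2⟩ := ((eventually_gt_atTop 0).and
      (h.eventually_ge_atTop (4 * K ^ 2))).exists
    exact ⟨m, h1, h2⟩
  exact (Nat.sInf_mem hne).1

/-- The signal `n ε²`, of order `E`, dominates the discretisation errors, of order `x`. -/
lemma margin {c A1 A2 A3 L E D x c1 : ℝ} (hc : 0 < c) (hA1 : 0 < A1) (hA : A3 ≤ A2 * x)
    (hD : D ≤ 4 * L ^ 2 * x) (hc1 : c1 ≤ c / (16 * A1)) (hE : 0 ≤ E)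
    (hQ : (c * A2 / (2 * A1) + 8 * c * L ^ 2) * x ≤ c / (8 * A1) * E) :
    c / (4 * A1) * E ≤ c / 2 * ((E - A3) / A1) - 2 * c * D - (2 * c1) * E := by
  have h1 : c / 2 * ((E - A2 * x) / A1) ≤ c / 2 * ((E - A3) / A1) := by gcongr
  have h3 : 2 * c * D ≤ 2 * c * (4 * L ^ 2 * x) := by gcongr
  have h4 : (2 * c1) * E ≤ (2 * (c / (16 * A1))) * E := by gcongr
  have e1 : c / 2 * ((E - A2 * x) / A1) = 4 * (c / (8 * A1) * E) - c * A2 / (2 * A1) * x := by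
    field_simp; ring
  have e2 : c / (4 * A1) * E = 2 * (c / (8 * A1) * E) := by field_simp; ring
  have e3 : (2 * (c / (16 * A1))) * E = c / (8 * A1) * E := by field_simp; ring
  have e4 : (c * A2 / (2 * A1) + 8 * c * L ^ 2) * x
      = c * A2 / (2 * A1) * x + 2 * c * (4 * L ^ 2 * x) := by ring
  rw [e1] at h1
  rw [e3] at h4
  rw [e4] at hQ
  rw [e2]
  linarith

/-- Exponential decay at a rate proportional to `n ε_n²`, provided the threshold constant `c1`
is small enough. -/
lemma exp_decay {κ K M : ℝ} (hκ : 0 < κ) (hκK : κ < K) (hM : 0 < M) {s0 : ℝ → ℝ}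
    (hs0 : memX κ K M s0) {εn : ℕ → ℝ} (hrate : rateCond εn) :
    ∃ c3 : ℝ, 0 < c3 ∧ ∃ cc : ℝ, 0 < cc ∧
      Tendsto (fun n : ℕ => n * (εn n) ^ 2) atTop atTop ∧
      ∀ c1 : ℝ, 0 < c1 → c1 ≤ c3 → ∃ N : ℕ, ∀ n : ℕ, N ≤ n →
        jointLaw s0 n {y : Fin n → ℝ | Real.exp (-c1 * n * (εn n)^2) ≤
            sSup {x : ℝ | ∃ s : ℝ → ℝ, memX κ K M s ∧ εn n ≤ Real.sqrt (l2DistSq s s0) ∧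
              x = likRatio s0 s n y}}
          ≤ ENNReal.ofReal (Real.exp (-(cc * (n * (εn n) ^ 2)))) := by
  obtain ⟨hpos, a, b, ha, -, hab⟩ := hrate
  have hK : 0 < K := hκ.trans hκK
  set R := K ^ 2 / κ ^ 2 with hR
  set A1 := K ^ 4 / (2 * κ ^ 2) with hA1
  set A2 := 8 * K ^ 2 * M ^ 2 / κ ^ 2 with hA2
  set L := max 1 (8 * K ^ 3 * M / κ ^ 4) with hLd
  set c := 1 / (4 * (R + 1)) with hc
  have hR1 : 1 ≤ R := by
    rw [hR, one_le_div (by positivity)]; gcongr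
  have hL1 : 1 ≤ L := le_max_left _ _
  have hA10 : 0 < A1 := by positivity
  have hA20 : 0 < A2 := by positivity
  have hc0 : 0 < c := by positivity
  set cc := c ^ 2 / (32 * A1) with hcc
  have hcc0 : 0 < cc := by positivity
  set Q := c * A2 / (2 * A1) + 8 * c * L ^ 2 with hQ
  set T := max 1 (max (Q * (8 * A1) / (c * a ^ 2)) (6 / (cc * a ^ 2))) with hT
  obtain ⟨N, hN⟩ := scales R L T hR1 hL1
  have hE : ∀ n : ℕ, N ≤ n →
      a ^ 2 * (n : ℝ) ^ ((1 : ℝ) / 3) * Real.log n ^ 2 ≤ n * (εn n) ^ 2 := by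
    intro n hn
    obtain ⟨h2, m, J, G, -, -, -, -, -, -, h1x, hlT⟩ := hN n hn
    have hn0 : (0 : ℝ) < n := by exact_mod_cast (by omega : 0 < n)
    have hlow := (hab n h2).1
    have e : (n : ℝ) ^ (-(1 : ℝ) / 3) = ((n : ℝ) ^ ((1 : ℝ) / 3))⁻¹ := by
      rw [neg_div, Real.rpow_neg hn0.le]
    have hx3 : ((n : ℝ) ^ ((1 : ℝ) / 3)) ^ 3 = n := by
      rw [← Real.rpow_natCast, ← Real.rpow_mul hn0.le]; norm_num
    rw [e] at hlow
    generalize (n : ℝ) ^ ((1 : ℝ) / 3) = x at *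
    have hl : 1 ≤ Real.log n := (le_max_left _ _).trans hlT
    have hx0 : 0 < x := by linarith
    calc a ^ 2 * x * Real.log n ^ 2 = x ^ 3 * (a * x⁻¹ * Real.log n) ^ 2 := by field_simp
      _ = n * (a * x⁻¹ * Real.log n) ^ 2 := by rw [hx3]
      _ ≤ _ := by gcongr
  refine ⟨c / (16 * A1), by positivity, cc, hcc0, ?_, ?_⟩
  · have hl : Tendsto (fun n : ℕ => a ^ 2 * Real.log n) atTop atTop :=
      (Real.tendsto_log_atTop.comp tendsto_natCast_atTop_atTop).const_mul_atTop (by positivity)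
    refine tendsto_atTop_mono' _ ?_ hl
    filter_upwards [eventually_ge_atTop N] with n hn
    obtain ⟨h2, m, J, G, -, -, -, -, -, -, h1x, hlT⟩ := hN n hn
    refine le_trans ?_ (hE n hn)
    have hl : 1 ≤ Real.log n := (le_max_left _ _).trans hlT
    rw [mul_assoc]
    gcongr
    nlinarith
  · intro c1 hc10 hc1
    refine ⟨N, fun n hn => ?_⟩
    have hEn := hE n hn
    obtain ⟨h2, m, J, G, hm, hJ, hG, hδ, hδ2, hcard, h1x, hlT⟩ := hN n hn
    have hn1 : (1 : ℝ) ≤ n := by exact_mod_cast (by omega : 1 ≤ n)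
    set x := (n : ℝ) ^ ((1 : ℝ) / 3) with hx
    set ℓ := Real.log n with hℓ
    set E := (n : ℝ) * (εn n) ^ 2 with hEd
    have hE0 : 0 < E := mul_pos (by linarith) (pow_pos (hpos n) 2)
    have hl1 : 1 ≤ ℓ := (le_max_left _ _).trans hlT
    have hl2 : Q * (8 * A1) / (c * a ^ 2) ≤ ℓ :=
      (le_max_left _ _).trans ((le_max_right _ _).trans hlT)
    have hl3 : 6 / (cc * a ^ 2) ≤ ℓ := (le_max_right _ _).trans ((le_max_right _ _).trans hlT)
    have hQx : Q * x ≤ c / (8 * A1) * E := by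
      have h1 : Q ≤ c / (8 * A1) * (a ^ 2 * ℓ) := by
        rw [div_le_iff₀ (by positivity)] at hl2
        rw [div_mul_eq_mul_div, le_div_iff₀ (by positivity)]
        linarith
      calc Q * x ≤ c / (8 * A1) * (a ^ 2 * ℓ) * x := by gcongr
        _ ≤ c / (8 * A1) * (a ^ 2 * ℓ) * x * ℓ :=
            le_mul_of_one_le_right (by positivity) hl1
        _ = c / (8 * A1) * (a ^ 2 * x * ℓ ^ 2) := by ring
        _ ≤ _ := by gcongr
    have hxl : 6 * x * ℓ ≤ cc * E := by
      have h1 : 6 ≤ cc * a ^ 2 * ℓ := by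
        rw [div_le_iff₀ (by positivity)] at hl3
        linarith
      calc 6 * x * ℓ ≤ cc * a ^ 2 * ℓ * x * ℓ := by gcongr
        _ = cc * (a ^ 2 * x * ℓ ^ 2) := by ring
        _ ≤ _ := by gcongr
    have hA2n : A2 / n ≤ A2 * x := by
      calc A2 / n ≤ A2 := div_le_self hA20.le hn1
        _ ≤ A2 * x := le_mul_of_one_le_right hA20.le h1x
    have hH : c / (4 * A1) * E ≤
        c / 2 * ((E - A2 / n) / A1) - 2 * c * (n * (L * m / n) ^ 2) - (2 * c1) * E := by
      exact margin hc0 hA10 hA2n hδ2 hc1 hE0.le hQx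
    have hcore := core_bound hκ hκK hM hs0 (by omega : 0 < n) hm hJ hL1 (le_max_right _ _)
      (hpos n) hG hδ hc hH
    refine (measure_mono ?_).trans (hcore.trans (ENNReal.ofReal_le_ofReal ?_))
    · intro y hy
      -- The supremum need not be attained; lowering the threshold from `exp (-c1 E)` to
      -- `exp (-2 c1 E)` yields some `s` that exceeds it.
      have hy : Real.exp (-c1 * n * (εn n) ^ 2) ≤ sSup {x : ℝ | ∃ s : ℝ → ℝ,
          memX κ K M s ∧ εn n ≤ √(l2DistSq s s0) ∧ x = likRatio s0 s n y} := hy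
      have hlt : Real.exp (-(2 * c1 * E)) < Real.exp (-c1 * n * (εn n) ^ 2) := by
        apply Real.exp_lt_exp.mpr
        have : -c1 * n * (εn n) ^ 2 = -(c1 * E) := by rw [hEd]; ring
        rw [this]
        linarith [mul_pos hc10 hE0]
      have hne : {x : ℝ | ∃ s : ℝ → ℝ, memX κ K M s ∧ εn n ≤ √(l2DistSq s s0) ∧
          x = likRatio s0 s n y}.Nonempty := by
        by_contra hcon
        rw [Set.not_nonempty_iff_eq_empty] at hcon
        rw [hcon, Real.sSup_empty] at hy
        exact absurd hy (not_le.mpr (Real.exp_pos _))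
      obtain ⟨_, ⟨s, hs, hd, rfl⟩, hgt⟩ := exists_lt_of_lt_csSup hne (hlt.trans_le hy)
      exact ⟨s, hs, hd, hgt.le⟩
    · have h2cc : c ^ 2 / (16 * A1) = 2 * cc := by rw [hcc]; ring
      calc _ ≤ Real.exp (cc * E) * Real.exp (-(c ^ 2 / (16 * A1) * E)) := by
            gcongr
            exact hcard.trans (Real.exp_le_exp.mpr hxl)
        _ = _ := by
            rw [← Real.exp_add, h2cc]
            congr 1
            ring

theorem statement3 (κ K M : ℝ) (hκ : 0 < κ) (hκK : κ < K) (hM : 0 < M)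
    (s0 : ℝ → ℝ) (hs0 : memX κ K M s0)
    (εn : ℕ → ℝ) (hrate : rateCond εn) :
    ∃ c0 : ℝ, 0 < c0 ∧ c0 ≤ (K^4/κ^4) * Real.sqrt sigma0Sq * min (Real.sqrt sigma0Sq) 4 ∧
    ∃ c1 : ℝ, 0 < c1 ∧ c1 < c0 * κ^2 / (2 * K^4) ∧
    ∃ C : ℝ, 0 < C ∧ ∃ N : ℕ,
      (∀ n : ℕ, N ≤ n →
        jointLaw s0 n {y : Fin n → ℝ | Real.exp (-c1 * n * (εn n)^2) ≤
            sSup {x : ℝ | ∃ s : ℝ → ℝ, memX κ K M s ∧ εn n ≤ Real.sqrt (l2DistSq s s0) ∧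
              x = likRatio s0 s n y}}
          ≤ ENNReal.ofReal (C * (Meps K (εn n) : ℝ) *
              Real.exp (-((c0 * κ^2 / (2 * K^4) - c1)^2
                  / (8 * C^2 * (4 * K^2 / κ^4 + 1) * sigma0Sq)) * n * (εn n)^2)))
      ∧ Filter.Tendsto (fun n : ℕ =>
          jointLaw s0 n {y : Fin n → ℝ | Real.exp (-c1 * n * (εn n)^2) ≤
            sSup {x : ℝ | ∃ s : ℝ → ℝ, memX κ K M s ∧ εn n ≤ Real.sqrt (l2DistSq s s0) ∧
              x = likRatio s0 s n y}}) atTop (nhds 0) := by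
  have hK : 0 < K := hκ.trans hκK
  have hσ : 0 < sigma0Sq := sigma0Sq_pos
  have hsσ : 0 < √sigma0Sq := Real.sqrt_pos.mpr hσ
  obtain ⟨c3, hc3, cc, hcc, hE, hmain⟩ := exp_decay hκ hκK hM hs0 hrate
  have hc0 : 0 < (K^4/κ^4) * √sigma0Sq * min (√sigma0Sq) 4 :=
    mul_pos (by positivity) (lt_min hsσ (by norm_num))
  refine ⟨_, hc0, le_rfl, ?_⟩
  generalize (K^4/κ^4) * √sigma0Sq * min (√sigma0Sq) 4 = c0 at hc0
  have hg : 0 < c0 * κ ^ 2 / (2 * K ^ 4) := by positivity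
  set g := c0 * κ ^ 2 / (2 * K ^ 4) with hgd
  have hc1 : 0 < min (g / 2) c3 := lt_min (by linarith) hc3
  refine ⟨min (g / 2) c3, hc1, (min_le_left _ _).trans_lt (by linarith), ?_⟩
  obtain ⟨N, hN⟩ := hmain _ hc1 (min_le_right _ _)
  set c1 := min (g / 2) c3 with hc1d
  set B := (4 * K ^ 2 / κ ^ 4 + 1) * sigma0Sq with hB
  have hB0 : 0 < B := by positivity
  -- A large `C` makes the exponent in the claim at most the rate `cc`.
  set C := 1 + (g - c1) ^ 2 / (8 * B * cc) with hC
  have hC1 : 1 ≤ C := by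
    have : 0 ≤ (g - c1) ^ 2 / (8 * B * cc) := by positivity
    linarith
  have hrate' : (g - c1) ^ 2 / (8 * C ^ 2 * (4 * K ^ 2 / κ ^ 4 + 1) * sigma0Sq) ≤ cc := by
    have e : 8 * C ^ 2 * (4 * K ^ 2 / κ ^ 4 + 1) * sigma0Sq = 8 * C ^ 2 * B := by rw [hB]; ring
    rw [e, div_le_iff₀ (by positivity)]
    have h1 : (g - c1) ^ 2 / (8 * B * cc) ≤ C ^ 2 := by
      have : (g - c1) ^ 2 / (8 * B * cc) ≤ C := by linarith
      nlinarith
    rw [div_le_iff₀ (by positivity)] at h1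
    linarith
  refine ⟨C, by linarith, N, fun n hn => ?_, ?_⟩
  · refine (hN n hn).trans (ENNReal.ofReal_le_ofReal ?_)
    have hM1 : (1 : ℝ) ≤ Meps K (εn n) := by exact_mod_cast one_le_Meps (hrate.1 n)
    have hE0 : 0 ≤ n * (εn n) ^ 2 := by positivity
    have h1 : Real.exp (-(cc * (n * (εn n) ^ 2))) ≤ Real.exp (-((g - c1) ^ 2
        / (8 * C ^ 2 * (4 * K ^ 2 / κ ^ 4 + 1) * sigma0Sq)) * n * (εn n) ^ 2) := by
      apply Real.exp_le_exp.mpr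
      have := mul_le_mul_of_nonneg_right hrate' hE0
      linarith
    exact h1.trans (le_mul_of_one_le_left (Real.exp_pos _).le (by nlinarith))
  · have hlim : Tendsto (fun n : ℕ => ENNReal.ofReal (Real.exp (-(cc * (n * (εn n) ^ 2)))))
        atTop (nhds 0) := by
      have h1 : Tendsto (fun n : ℕ => Real.exp (-(cc * (n * (εn n) ^ 2)))) atTop (nhds 0) :=
        Real.tendsto_exp_neg_atTop_nhds_zero.comp (hE.const_mul_atTop hcc)
      simpa using ENNReal.tendsto_ofReal h1
    exact tendsto_of_tendsto_of_tendsto_of_le_of_le' tendsto_const_nhds hlim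
      (Eventually.of_forall fun _ => zero_le) (eventually_atTop.mpr ⟨N, hN⟩)
end
end
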